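/- arXiv:1005.2216 — 3 statements merged into one kernel-verified Lean document; each statement's English description precedes it below -/
import Mathlib

section
/- Let p ∈ S_ℓ with k = ℓ−2. If p is a Baxter permutation then s_n^k(p) = binomial(n,k) for each n ≥ k; if p is not a Baxter permutation, then s_n^k(p) < binomial(n,k) for each n ≥ k+3. In particular, all Baxter permutations of length ℓ are strongly k-Wilf equivalent. -/
open Finset

/-- The word `σ` contains the pattern `p`: there is a subsequence of `σ`
order-isomorphic to `p`. -/
def ContainsPat {n ℓ : ℕ} {α β : Type*} [LinearOrder α] [LinearOrder β]
    (σ : Fin n → α) (p : Fin ℓ → β) : Prop :=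
  ∃ g : Fin ℓ → Fin n, StrictMono g ∧ ∀ a b : Fin ℓ, σ (g a) < σ (g b) ↔ p a < p b

/-- `σ ∈ S_n` is an extension of the partial permutation `π`: on the non-hole
positions, the relative order of the values of `σ` matches that of `π`. -/
def IsExtension {n : ℕ} {α : Type*} [LinearOrder α]
    (σ : Equiv.Perm (Fin n)) (π : Fin n → Option α) : Prop :=
  ∀ i j : Fin n, ∀ vi vj : α, π i = some vi → π j = some vj → (σ i < σ j ↔ vi < vj)

/-- The partial permutation `π` avoids the pattern `p`: every extension avoids `p`. -/
def PPAvoids {n ℓ : ℕ} {α β : Type*} [LinearOrder α] [LinearOrder β]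
    (π : Fin n → Option α) (p : Fin ℓ → β) : Prop :=
  ∀ σ : Equiv.Perm (Fin n), IsExtension σ π → ¬ ContainsPat (⇑σ) p

/-- `π` is a partial permutation of length `n` with `k` holes: each value of
`{1,…,n-k}` appears exactly once and there are exactly `k` holes. -/
def IsPPerm {n : ℕ} (k : ℕ) (π : Fin n → Option (Fin (n - k))) : Prop :=
  (Finset.univ.filter fun i => π i = none).card = k ∧
    ∀ v : Fin (n - k), ∃! i : Fin n, π i = some v

/-- `π` is a partial permutation whose holes are exactly at the positions in `H`. -/
def IsPPermH {n : ℕ} (H : Finset (Fin n)) (π : Fin n → Option (Fin (n - H.card))) : Prop :=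
  (∀ i, π i = none ↔ i ∈ H) ∧ ∀ v : Fin (n - H.card), ∃! i : Fin n, π i = some v

/-- `s_n^k(p)`: the number of `p`-avoiding partial permutations of length `n`
with `k` holes. -/
noncomputable def snk (n k : ℕ) {ℓ : ℕ} (p : Fin ℓ → Fin ℓ) : ℕ :=
  Nat.card {π : Fin n → Option (Fin (n - k)) // IsPPerm k π ∧ PPAvoids π p}

/-- `s_n^H(p)`: the number of `p`-avoiding partial permutations of length `n`
with hole set `H`. -/
noncomputable def snH {n ℓ : ℕ} (H : Finset (Fin n)) (p : Fin ℓ → Fin ℓ) : ℕ :=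
  Nat.card {π : Fin n → Option (Fin (n - H.card)) // IsPPermH H π ∧ PPAvoids π p}

/-- The number of permutations of length `m` avoiding the pattern `p`. -/
noncomputable def avoidCount (m : ℕ) {ℓ : ℕ} (p : Fin ℓ → Fin ℓ) : ℕ :=
  Nat.card {σ : Equiv.Perm (Fin m) // ¬ ContainsPat (⇑σ) p}

/-- `p` is a Baxter permutation: no indices `a < b < c = b+1 < d` such that
`(p a, p b, p c, p d)` is order-isomorphic to `2413` or `3142`. -/
def IsBaxter {ℓ : ℕ} (p : Fin ℓ → Fin ℓ) : Prop :=
  ¬ ∃ a b c d : Fin ℓ, a < b ∧ (b : ℕ) + 1 = (c : ℕ) ∧ c < d ∧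
    ((p c < p a ∧ p a < p d ∧ p d < p b) ∨ (p b < p d ∧ p d < p a ∧ p a < p c))

/-!
Fix a hole set `H` with `#H = k`. Two non-hole positions `i < j` together with `H` form a
potential occurrence of `p`, in which `i` and `j` have ranks `a = holesBelow H i` and
`b + 1 = holesBelow H j + 1`. Since the holes can be filled arbitrarily, avoidance forces the
entries at `i` and `j` to be in the opposite order to `p a` and `p (b + 1)`. Conversely, these
constraints suffice: every choice of `k + 2` positions contains two non-holes that are in such a
situation. So the avoiding partial permutations with hole set `H` are the order isomorphisms from
the forced relation on the non-holes to a chain; there is at most one, and there is one exactly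
when the forced relation is transitive. A cyclic triple of the forced relation is precisely an
occurrence of `2413` or `3142` of the kind that a Baxter permutation excludes, and every such
occurrence yields a cyclic triple for a suitable `H` as soon as `n ≥ k + 3`.
-/

section Word

variable {n : ℕ} {α β : Type*} {H : Finset (Fin n)}

/-- The partial permutation with hole set `H` whose entry at a position `i ∉ H` is `f i`. -/
def withHoles (f : {i // i ∉ H} → α) (i : Fin n) : Option α :=
  if h : i ∈ H then none else some (f ⟨i, h⟩)

lemma withHoles_of_notMem (f : {i // i ∉ H} → α) {i : Fin n} (hi : i ∉ H) :
    withHoles f i = some (f ⟨i, hi⟩) :=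
  dif_neg hi

lemma withHoles_eq_none_iff {f : {i // i ∉ H} → α} {i : Fin n} :
    withHoles f i = none ↔ i ∈ H := by
  simp [withHoles]

lemma withHoles_eq_some_iff {f : {i // i ∉ H} → α} {i : Fin n} {v : α} :
    withHoles f i = some v ↔ ∃ h : i ∉ H, f ⟨i, h⟩ = v := by
  by_cases h : i ∈ H <;> simp [withHoles, h]

lemma withHoles_injective :
    Function.Injective (withHoles : ({i // i ∉ H} → α) → Fin n → Option α) := by
  intro f f' h
  ext i
  simpa [withHoles_of_notMem _ i.2] using congrFun h i

lemma eq_of_withHoles_eq_some {f : {i // i ∉ H} → α} (hf : Function.Injective f) {i j : Fin n}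
    {v : α} (hi : withHoles f i = some v) (hj : withHoles f j = some v) : i = j := by
  obtain ⟨hiH, rfl⟩ := withHoles_eq_some_iff.1 hi
  obtain ⟨hjH, h⟩ := withHoles_eq_some_iff.1 hj
  exact (congrArg Subtype.val (hf h)).symm

variable [LinearOrder α] [LinearOrder β]

lemma isExtension_withHoles_iff {σ : Equiv.Perm (Fin n)} {f : {i // i ∉ H} → α} :
    IsExtension σ (withHoles f) ↔ ∀ i j : {i // i ∉ H}, σ i < σ j ↔ f i < f j := by
  constructor
  · exact fun h i j => h i j _ _ (withHoles_of_notMem f i.2) (withHoles_of_notMem f j.2)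
  · intro h i j vi vj hi hj
    obtain ⟨hiH, rfl⟩ := withHoles_eq_some_iff.1 hi
    obtain ⟨hjH, rfl⟩ := withHoles_eq_some_iff.1 hj
    exact h ⟨i, hiH⟩ ⟨j, hjH⟩

lemma isPPermH_iff_exists_withHoles {π : Fin n → Option (Fin (n - #H))} :
    IsPPermH H π ↔
      ∃ f : {i // i ∉ H} → Fin (n - #H), Function.Bijective f ∧ withHoles f = π := by
  constructor
  · rintro ⟨hnone, huniq⟩
    have hsome (i : {i // i ∉ H}) : ∃ v, π i = some v :=
      Option.ne_none_iff_exists'.1 (mt (hnone i).1 i.2)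
    choose f hf using hsome
    refine ⟨f, ⟨fun i j hij => ?_, fun v => ?_⟩, funext fun i => ?_⟩
    · exact Subtype.ext ((huniq (f i)).unique (hf i) (hij ▸ hf j))
    · obtain ⟨i, hi, -⟩ := huniq v
      have hiH : i ∉ H := mt (hnone i).2 (by simp [hi])
      exact ⟨⟨i, hiH⟩, Option.some_injective _ ((hf ⟨i, hiH⟩).symm.trans hi)⟩
    · by_cases hi : i ∈ H
      · rw [withHoles_eq_none_iff.2 hi, (hnone i).2 hi]
      · rw [withHoles_of_notMem f hi, hf ⟨i, hi⟩]
  · rintro ⟨f, hf, rfl⟩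
    refine ⟨fun i => withHoles_eq_none_iff, fun v => ?_⟩
    obtain ⟨i, rfl⟩ := hf.2 v
    exact ⟨i, withHoles_of_notMem f i.2,
      fun j hj => eq_of_withHoles_eq_some hf.1 hj (withHoles_of_notMem f i.2)⟩

lemma exists_perm_lt_iff_lt {w : Fin n → β} (hw : Function.Injective w) :
    ∃ σ : Equiv.Perm (Fin n), ∀ x y, σ x < σ y ↔ w x < w y := by
  have hmono : StrictMono (w ∘ Tuple.sort w) :=
    (Tuple.monotone_sort w).strictMono_of_injective (hw.comp (Tuple.sort w).injective)
  refine ⟨(Tuple.sort w).symm, fun x y => ?_⟩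
  rw [← hmono.lt_iff_lt]
  simp

lemma not_ppAvoids_withHoles_of_level {ℓ : ℕ} {p : Fin ℓ → β} (hp : Function.Injective p)
    {f : {i // i ∉ H} → α} (hf : Function.Injective f) {g : Fin ℓ → Fin n} (hg : StrictMono g)
    {level : Fin n → β} {t : α → β} (ht : Monotone t)
    (hlevel : ∀ i : {i // i ∉ H}, level i = t (f i)) (hinj : Set.InjOn level H)
    (hpat : ∀ a, level (g a) = p a) : ¬ PPAvoids (withHoles f) p := by
  -- Order the positions by level, breaking ties by the entries (with holes below all of them).
  let w (i : Fin n) : β ×ₗ WithBot α := toLex (level i, withHoles f i)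
  have hw : Function.Injective w := by
    intro i j hij
    obtain ⟨hl, hv⟩ := Prod.ext_iff.1 (toLex.injective hij)
    by_cases hi : i ∈ H
    · have hj : j ∈ H :=
        withHoles_eq_none_iff.1 ((Eq.symm hv).trans (withHoles_eq_none_iff.2 hi))
      exact hinj hi hj hl
    · exact eq_of_withHoles_eq_some hf (withHoles_of_notMem f hi)
        ((Eq.symm hv).trans (withHoles_of_notMem f hi))
  obtain ⟨σ, hσ⟩ := exists_perm_lt_iff_lt hw
  have hext : IsExtension σ (withHoles f) := by
    refine isExtension_withHoles_iff.2 fun i j => ?_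
    have hstrict : StrictMono fun v : α => (toLex (t v, (v : WithBot α)) : β ×ₗ WithBot α) :=
      Prod.Lex.toLex_strictMono.comp
        fun u v huv => Prod.mk_lt_mk.2 (.inr ⟨ht huv.le, WithBot.coe_lt_coe.2 huv⟩)
    have hwf (i : {i // i ∉ H}) : w i = toLex (t (f i), (f i : WithBot α)) := by
      simp only [w, hlevel, withHoles_of_notMem f i.2]; rfl
    rw [hσ, hwf, hwf]
    exact hstrict.lt_iff_lt
  refine fun hav => hav σ hext ⟨g, hg, fun a b => ?_⟩
  rw [hσ]
  simp only [w, Prod.Lex.toLex_lt_toLex, hpat]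
  refine or_iff_left ?_
  rintro ⟨hab, hlt⟩
  rw [hp hab] at hlt
  exact lt_irrefl _ hlt

lemma not_ppAvoids_withHoles_of_range_eq {ℓ : ℕ} {p : Fin ℓ → β} (hp : Function.Injective p)
    {f : {i // i ∉ H} → α} (hf : Function.Injective f) {g : Fin ℓ → Fin n} (hg : StrictMono g)
    {a b : Fin ℓ} (ha : g a ∉ H) (hb : g b ∉ H)
    (hrange : Set.range g = insert (g a) (insert (g b) (H : Set (Fin n))))
    (hfab : f ⟨g a, ha⟩ < f ⟨g b, hb⟩) (hpab : p a < p b) : ¬ PPAvoids (withHoles f) p := by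
  have hholes (i : Fin n) (hi : i ∈ H) : ∃ c, g c = i := by
    change i ∈ Set.range g
    simp [hrange, hi]
  choose r hr using hholes
  let t (v : α) : β := if v ≤ f ⟨g a, ha⟩ then p a else p b
  have ht : Monotone t := by
    intro u v huv
    dsimp only [t]
    split_ifs with hu hv hv
    · exact le_rfl
    · exact hpab.le
    · exact absurd (huv.trans hv) hu
    · exact le_rfl
  let level (i : Fin n) : β := if h : i ∈ H then p (r i h) else t (f ⟨i, h⟩)
  have hlevel (i : {i // i ∉ H}) : level i = t (f i) := dif_neg i.2
  refine not_ppAvoids_withHoles_of_level hp hf hg ht hlevel ?_ fun c => ?_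
  · intro i hi j hj hij
    simp only [level, mem_coe.1 hi, mem_coe.1 hj, dif_pos] at hij
    rw [← hr i hi, ← hr j hj, hp hij]
  · by_cases hc : g c ∈ H
    · simp only [level, hc, dif_pos]
      rw [hg.injective (hr _ hc)]
    · have hc' : g c ∈ insert (g a) (insert (g b) (H : Set (Fin n))) := hrange ▸ ⟨c, rfl⟩
      rcases hc' with h | h | h
      · obtain rfl := hg.injective h
        simp [hlevel ⟨_, ha⟩, t]
      · obtain rfl := hg.injective h
        simp [hlevel ⟨_, hb⟩, t, hfab]
      · exact absurd h hc

end Word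

section Rank

variable {n : ℕ}

/-- The number of holes to the left of position `i`, as an index into the `#H + 1` gaps that
the holes leave. -/
def holesBelow (H : Finset (Fin n)) (i : Fin n) : Fin (#H + 1) :=
  ⟨#{h ∈ H | h < i}, Nat.lt_succ_of_le (card_filter_le _ _)⟩

lemma val_holesBelow (H : Finset (Fin n)) (i : Fin n) :
    (holesBelow H i : ℕ) = #{h ∈ H | h < i} := rfl

lemma holesBelow_mono (H : Finset (Fin n)) : Monotone (holesBelow H) :=
  fun _ _ hij => card_le_card <| monotone_filter_right H fun _ _ hh => hh.trans_le hij

lemma orderEmbOfFin_eq_of_val_eq_card {α : Type*} [LinearOrder α] {s : Finset α} {k : ℕ}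
    (hs : #s = k) {x : α} (hx : x ∈ s) {a : Fin k} (ha : (a : ℕ) = #{y ∈ s | y < x}) :
    s.orderEmbOfFin hs a = x := by
  obtain ⟨b, rfl⟩ : x ∈ Set.range (s.orderEmbOfFin hs) := by simpa using hx
  have hfilter : ({y ∈ s | y < s.orderEmbOfFin hs b} : Finset α) =
      (Iio b).map (s.orderEmbOfFin hs).toEmbedding := by
    conv_lhs => arg 2; rw [← map_orderEmbOfFin_univ s hs]
    rw [filter_map]
    congr 1
    ext c
    simp
  rw [hfilter, card_map, Fin.card_Iio] at ha
  rw [Fin.ext ha]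

lemma exists_strictMono_range_eq_insert {H : Finset (Fin n)} {i j : Fin n} (hi : i ∉ H)
    (hj : j ∉ H) (hij : i < j) :
    ∃ g : Fin (#H + 2) → Fin n, StrictMono g ∧ g (holesBelow H i).castSucc = i ∧
      g (holesBelow H j).succ = j ∧ Set.range g = insert i (insert j (H : Set (Fin n))) := by
  have hcard : #(insert i (insert j H)) = #H + 2 := by
    rw [card_insert_of_notMem (by simp [hij.ne, hi]), card_insert_of_notMem hj]
  refine ⟨(insert i (insert j H)).orderEmbOfFin hcard, OrderEmbedding.strictMono _,
    orderEmbOfFin_eq_of_val_eq_card hcard (by simp) ?_,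
    orderEmbOfFin_eq_of_val_eq_card hcard (by simp) ?_, by simp⟩
  · simp [filter_insert, hij.le.not_gt, val_holesBelow]
  · simp [filter_insert, hij, val_holesBelow, hi]

lemma exists_val_eq_card_filter_lt_add {ℓ : ℕ} {g : Fin ℓ → Fin n} (hg : StrictMono g)
    {H : Finset (Fin n)} {t : ℕ} (ht : #H + t < ℓ) :
    ∃ a : Fin ℓ, g a ∉ H ∧ (a : ℕ) = #{h ∈ H | h < g a} + t ∧
      ∀ b, a < b → #{h ∈ H | h < g b} + t < b := by
  let C : Finset (Fin ℓ) := {a | (a : ℕ) ≤ #{h ∈ H | h < g a} + t}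
  obtain ⟨a, haC, hmax⟩ := C.exists_max_image id ⟨⟨0, by omega⟩, by simp [C]⟩
  have hlt (b : Fin ℓ) (hab : a < b) : #{h ∈ H | h < g b} + t < b := by
    by_contra hb
    exact (hmax b (by simpa [C] using hb)).not_gt hab
  have hle : (a : ℕ) ≤ #{h ∈ H | h < g a} + t := by simpa [C] using haC
  have hge : #{h ∈ H | h ≤ g a} + t ≤ a := by
    by_cases hlast : (a : ℕ) + 1 < ℓ
    · have hsucc : a < ⟨a + 1, hlast⟩ := Fin.lt_def.2 (Nat.lt_succ_self _)
      have hmono : #{h ∈ H | h ≤ g a} ≤ #{h ∈ H | h < g ⟨a + 1, hlast⟩} :=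
        card_le_card <| monotone_filter_right H fun _ _ hh => hh.trans_lt (hg hsucc)
      have := hlt _ hsucc
      simp only at this
      omega
    · have := card_filter_le H (· ≤ g a)
      omega
  have hsub : ({h ∈ H | h < g a} : Finset (Fin n)) ⊆ {h ∈ H | h ≤ g a} :=
    monotone_filter_right H fun _ _ hh => hh.le
  refine ⟨a, fun haH => ?_, ?_, hlt⟩
  · have : #{h ∈ H | h < g a} < #{h ∈ H | h ≤ g a} :=
      card_lt_card <| hsub.ssubset_of_mem_notMem (a := g a) (by simp [haH]) (by simp)
    omega
  · have := card_le_card hsub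
    omega

lemma exists_card_eq_and_card_filter_lt_eq {k a b c : ℕ} (hab : a < b) (hbc : b < c) (hck : c ≤ k)
    (hn : k + 3 ≤ n) :
    ∃ H : Finset (Fin n), #H = k ∧ ∃ x ∉ H, ∃ y ∉ H, ∃ z ∉ H, x < y ∧ y < z ∧
      #{h ∈ H | h < x} = a ∧ #{h ∈ H | h < y} = b ∧ #{h ∈ H | h < z} = c := by
  let x : Fin n := ⟨a, by omega⟩
  let y : Fin n := ⟨b + 1, by omega⟩
  let z : Fin n := ⟨c + 2, by omega⟩
  have hxy : x < y := Fin.lt_def.2 (by grind)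
  have hyz : y < z := Fin.lt_def.2 (by grind)
  let I : Finset (Fin n) := {i | (i : ℕ) < k + 3}
  have hI : #I = k + 3 := by simp [I, Fin.card_filter_val_lt, hn]
  let H : Finset (Fin n) := ((I.erase x).erase y).erase z
  have hcard : #H = k := by
    have hx : x ∈ I := by simp only [I, x, mem_filter_univ]; omega
    have hy : y ∈ I := by simp only [I, y, mem_filter_univ]; omega
    have hz : z ∈ I := by simp only [I, z, mem_filter_univ]; omega
    simp [H, card_erase_of_mem, hI, hx, hy, hz, hxy.ne', hyz.ne', (hxy.trans hyz).ne']
  have hlt (i : Fin n) (hi : i ≤ z) : {h ∈ H | h < i} = ((Iio i).erase x).erase y := by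
    ext h
    simp only [H, I, mem_filter, mem_erase, mem_Iio]
    grind
  refine ⟨H, hcard, x, by simp [H], y, by simp [H], z, by simp [H], hxy, hyz, ?_, ?_, ?_⟩
  · simp [hlt x (hxy.trans hyz).le, hxy.not_gt, x]
  · simp [hlt y hyz.le, card_erase_of_mem, hxy, y]
  · simp [hlt z le_rfl, card_erase_of_mem, hxy.trans hyz, hyz, hxy.ne', z]

end Rank

section ForcedOrder

lemma apply_castSucc_ne_apply_succ {γ : Type*} {m : ℕ} {q : Fin (m + 1) → γ}
    (hq : Function.Injective q) {a b : Fin m} (hab : a ≤ b) : q a.castSucc ≠ q b.succ :=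
  hq.ne (Fin.castSucc_lt_succ_iff.2 hab).ne

variable {n : ℕ} {α β : Type*} [LinearOrder α] [LinearOrder β] {H : Finset (Fin n)}
  {p : Fin (#H + 2) → β}

/-- The comparison between the entries at the non-hole positions `i` and `j` that avoidance of
`p` forces on a partial permutation with hole set `H`. For `i < j`, the positions `i` and `j`
have ranks `holesBelow H i` and `holesBelow H j + 1` in `H ∪ {i, j}`, and their entries must be
in the opposite order to the entries of `p` at these ranks. -/
def forcedLT (H : Finset (Fin n)) (p : Fin (#H + 2) → β) (i j : Fin n) : Prop :=
  (i < j ∧ p (holesBelow H j).succ < p (holesBelow H i).castSucc) ∨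
    (j < i ∧ p (holesBelow H j).castSucc < p (holesBelow H i).succ)

lemma forcedLT_iff_of_lt {i j : Fin n} (hij : i < j) :
    forcedLT H p i j ↔ p (holesBelow H j).succ < p (holesBelow H i).castSucc := by
  simp [forcedLT, hij, hij.not_gt]

lemma forcedLT_iff_of_gt {i j : Fin n} (hji : j < i) :
    forcedLT H p i j ↔ p (holesBelow H j).castSucc < p (holesBelow H i).succ := by
  simp [forcedLT, hji, hji.not_gt]

lemma not_forcedLT_self (i : Fin n) : ¬ forcedLT H p i i := by
  simp [forcedLT]

lemma forcedLT_iff_not_forcedLT (hp : Function.Injective p) {i j : Fin n} (hij : i ≠ j) :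
    forcedLT H p i j ↔ ¬ forcedLT H p j i := by
  wlog h : i < j generalizing i j
  · rw [this hij.symm (lt_of_le_of_ne (not_lt.1 h) hij.symm), not_not]
  rw [forcedLT_iff_of_lt h, forcedLT_iff_of_gt h, not_lt]
  exact (apply_castSucc_ne_apply_succ hp (holesBelow_mono H h.le)).symm.le_iff_lt.symm

lemma lt_iff_forcedLT_of_ppAvoids (hp : Function.Injective p) {f : {i // i ∉ H} → α}
    (hf : Function.Injective f) (hav : PPAvoids (withHoles f) p) {i j : {i // i ∉ H}}
    (hij : (i : Fin n) < j) : f i < f j ↔ forcedLT H p i j := by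
  obtain ⟨i, hi⟩ := i
  obtain ⟨j, hj⟩ := j
  obtain ⟨g, hg, hgi, hgj, hrange⟩ := exists_strictMono_range_eq_insert hi hj hij
  have hne : f ⟨i, hi⟩ ≠ f ⟨j, hj⟩ := hf.ne (by simpa using hij.ne)
  have hpne := apply_castSucc_ne_apply_succ hp (holesBelow_mono H hij.le)
  rw [forcedLT_iff_of_lt hij]
  generalize (holesBelow H i).castSucc = a at *
  generalize (holesBelow H j).succ = b at *
  subst hgi hgj
  constructor
  · intro hlt
    by_contra hge
    exact not_ppAvoids_withHoles_of_range_eq hp hf hg hi hj hrange hlt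
      (lt_of_le_of_ne (not_lt.1 hge) hpne) hav
  · intro hlt
    by_contra hge
    exact not_ppAvoids_withHoles_of_range_eq hp hf hg hj hi (hrange.trans (Set.insert_comm ..))
      (lt_of_le_of_ne (not_lt.1 hge) hne.symm) hlt hav

lemma ppAvoids_withHoles_of_forall_lt (hp : Function.Injective p) {f : {i // i ∉ H} → α}
    (h : ∀ i j : {i // i ∉ H}, (i : Fin n) < j → (f i < f j ↔ forcedLT H p i j)) :
    PPAvoids (withHoles f) p := by
  rintro σ hσ ⟨g, hg, hpat⟩
  obtain ⟨a, haH, ha, -⟩ := exists_val_eq_card_filter_lt_add hg (H := H) (t := 0) (by omega)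
  obtain ⟨b, hbH, hb, hmax⟩ := exists_val_eq_card_filter_lt_add hg (H := H) (t := 1) (by omega)
  have hab : a < b := by
    rcases lt_trichotomy a b with hlt | rfl | hgt
    · exact hlt
    · omega
    · have := hmax a hgt
      omega
  have ha' : (holesBelow H (g a)).castSucc = a := Fin.ext ha.symm
  have hb' : (holesBelow H (g b)).succ = b := Fin.ext hb.symm
  have hswap : p a < p b ↔ p b < p a := by
    rw [← hpat, isExtension_withHoles_iff.1 hσ ⟨g a, haH⟩ ⟨g b, hbH⟩,
      h ⟨g a, haH⟩ ⟨g b, hbH⟩ (hg hab), forcedLT_iff_of_lt (hg hab), ha', hb']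
  rcases lt_or_gt_of_ne (hp.ne hab.ne) with hlt | hlt
  · exact lt_asymm hlt (hswap.1 hlt)
  · exact lt_asymm hlt (hswap.2 hlt)

lemma ppAvoids_withHoles_iff (hp : Function.Injective p) {f : {i // i ∉ H} → α}
    (hf : Function.Injective f) :
    PPAvoids (withHoles f) p ↔ ∀ i j : {i // i ∉ H}, f i < f j ↔ forcedLT H p i j := by
  refine ⟨fun hav i j => ?_, fun h => ppAvoids_withHoles_of_forall_lt hp fun i j _ => h i j⟩
  rcases lt_trichotomy i j with hij | rfl | hji
  · exact lt_iff_forcedLT_of_ppAvoids hp hf hav hij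
  · simp [not_forcedLT_self]
  · have hle : f j ≤ f i ↔ f j < f i := (hf.ne hji.ne).le_iff_lt
    rw [← not_le, hle, lt_iff_forcedLT_of_ppAvoids hp hf hav hji,
      ← forcedLT_iff_not_forcedLT hp (Subtype.coe_injective.ne hji.ne')]

lemma isTrans_forcedLT_of_forall_lt (hp : Function.Injective p)
    (h : ∀ x y z : Fin n, x < y → y < z →
      (forcedLT H p x y → forcedLT H p y z → forcedLT H p x z) ∧
      (forcedLT H p z y → forcedLT H p y x → forcedLT H p z x)) :
    IsTrans (Fin n) (forcedLT H p) := by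
  refine ⟨fun x y z hxy hyz => ?_⟩
  have hirr := not_forcedLT_self (H := H) (p := p)
  have hnot (i j : Fin n) := forcedLT_iff_not_forcedLT hp (i := i) (j := j)
  -- A failure of transitivity is a cyclic triple, and rotating it makes its positions monotone.
  grind

end ForcedOrder

section Baxter

variable {n k : ℕ}

lemma isBaxter_iff_forall_gap {p : Fin (k + 2) → Fin (k + 2)} (hp : Function.Injective p) :
    IsBaxter p ↔ ∀ a b c : Fin (k + 1), a < b → b < c →
      (p b.succ < p a.castSucc → p c.succ < p b.castSucc → p c.succ < p a.castSucc) ∧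
      (p b.castSucc < p c.succ → p a.castSucc < p b.succ → p a.castSucc < p c.succ) := by
  constructor
  · intro hB a b c hab hbc
    have hpat := not_or.1 fun h => hB ⟨a.castSucc, b.castSucc, b.succ, c.succ,
      Fin.castSucc_lt_castSucc_iff.2 hab, rfl, Fin.succ_lt_succ_iff.2 hbc, h⟩
    have := apply_castSucc_ne_apply_succ hp (hab.trans hbc).le
    grind
  · rintro h ⟨a, b, b', d, hab, hbb', hbd, hpat⟩
    have hb : (⟨b, by omega⟩ : Fin (k + 1)).succ = b' := Fin.ext hbb'
    have hd : (⟨d - 1, by omega⟩ : Fin (k + 1)).succ = d := Fin.ext (by simp; omega)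
    have := h ⟨a, by omega⟩ ⟨b, by omega⟩ ⟨d - 1, by omega⟩ (by simpa using hab)
      (by simp only [Fin.mk_lt_mk]; omega)
    rw [hb, hd] at this
    simp only [Fin.castSucc_mk, Fin.eta] at this
    grind

lemma IsBaxter.isTrans_forcedLT {H : Finset (Fin n)} {p : Fin (#H + 2) → Fin (#H + 2)}
    (hB : IsBaxter p) (hp : Function.Injective p) : IsTrans (Fin n) (forcedLT H p) := by
  refine isTrans_forcedLT_of_forall_lt hp fun x y z hxy hyz => ?_
  rw [forcedLT_iff_of_lt hxy, forcedLT_iff_of_lt hyz, forcedLT_iff_of_lt (hxy.trans hyz),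
    forcedLT_iff_of_gt hxy, forcedLT_iff_of_gt hyz, forcedLT_iff_of_gt (hxy.trans hyz)]
  have hab := holesBelow_mono H hxy.le
  have hbc := holesBelow_mono H hyz.le
  generalize holesBelow H x = a at *
  generalize holesBelow H y = b at *
  generalize holesBelow H z = c at *
  rcases hab.eq_or_lt with rfl | hab
  · exact ⟨fun _ h => h, fun h _ => h⟩
  rcases hbc.eq_or_lt with rfl | hbc
  · exact ⟨fun h _ => h, fun _ h => h⟩
  · exact (isBaxter_iff_forall_gap hp).1 hB a b c hab hbc

end Baxter

section Counting

variable {n k : ℕ}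

lemma snk_eq_sum_snH {ℓ : ℕ} (p : Fin ℓ → Fin ℓ) :
    snk n k p = ∑ H ∈ powersetCard k (univ : Finset (Fin n)), snH H p := by
  classical
  let holes (π : Fin n → Option (Fin (n - k))) : Finset (Fin n) := {i | π i = none}
  have hmaps : Set.MapsTo holes
      ({π | IsPPerm k π ∧ PPAvoids π p} : Finset (Fin n → Option (Fin (n - k))))
      (powersetCard k (univ : Finset (Fin n))) := by
    intro π hπ
    have hπ' : IsPPerm k π ∧ PPAvoids π p := by simpa using hπ
    exact mem_coe.2 (mem_powersetCard.2 ⟨subset_univ _, hπ'.1.1⟩)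
  rw [snk, Nat.card_eq_fintype_card, Fintype.card_subtype, card_eq_sum_card_fiberwise hmaps]
  refine sum_congr rfl fun H hH => ?_
  obtain rfl := (mem_powersetCard.1 hH).2
  rw [snH, Nat.card_eq_fintype_card, Fintype.card_subtype, filter_filter]
  congr 1
  refine filter_congr fun π _ => ?_
  have hholes : holes π = H ↔ ∀ i, π i = none ↔ i ∈ H := by simp [holes, Finset.ext_iff]
  rw [IsPPerm, IsPPermH, ← hholes]
  constructor
  · rintro ⟨⟨⟨-, huniq⟩, hav⟩, hH⟩
    exact ⟨⟨hH, huniq⟩, hav⟩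
  · rintro ⟨⟨hH, huniq⟩, hav⟩
    exact ⟨⟨⟨congrArg card hH, huniq⟩, hav⟩, hH⟩

instance relIso_subsingleton {α γ : Type*} {r : α → α → Prop} {s : γ → γ → Prop}
    [IsWellOrder γ s] : Subsingleton (r ≃r s) :=
  ⟨fun e f => RelIso.ext fun a => InitialSeg.eq e.toInitialSeg f.toInitialSeg a⟩

lemma nonempty_relIso_fin {α : Type*} [Fintype α] (r : α → α → Prop)
    [IsStrictTotalOrder α r] {m : ℕ} (hm : Fintype.card α = m) :
    Nonempty (r ≃r ((· < ·) : Fin m → Fin m → Prop)) := by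
  classical
  let := linearOrderOfSTO r
  exact ⟨(Fintype.orderIsoFinOfCardEq α hm).symm.toRelIsoLT⟩

lemma snH_eq_card_relIso {H : Finset (Fin n)} {p : Fin (#H + 2) → Fin (#H + 2)}
    (hp : Function.Injective p) :
    snH H p = Nat.card (Subrel (forcedLT H p) (· ∉ H) ≃r
      ((· < ·) : Fin (n - #H) → Fin (n - #H) → Prop)) := by
  symm
  refine Nat.card_eq_of_bijective (fun e => ⟨withHoles e,
    isPPermH_iff_exists_withHoles.2 ⟨e, e.bijective, rfl⟩,
    (ppAvoids_withHoles_iff hp e.injective).2 fun _ _ => e.map_rel_iff⟩) ⟨?_, ?_⟩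
  · intro e e' h
    exact DFunLike.coe_injective (withHoles_injective (congrArg Subtype.val h))
  · rintro ⟨π, hπ, hav⟩
    obtain ⟨f, hf, rfl⟩ := isPPermH_iff_exists_withHoles.1 hπ
    exact ⟨⟨Equiv.ofBijective f hf, (ppAvoids_withHoles_iff hp hf.1).1 hav _ _⟩, rfl⟩

variable {p : Fin (k + 2) → Fin (k + 2)}

lemma snH_le_one (hp : Function.Injective p) {H : Finset (Fin n)} (hH : #H = k) :
    snH H p ≤ 1 := by
  subst hH
  rw [snH_eq_card_relIso hp]
  exact Finite.card_le_one_iff_subsingleton.2 inferInstance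

lemma IsBaxter.snH_eq_one (hB : IsBaxter p) (hp : Function.Injective p) {H : Finset (Fin n)}
    (hH : #H = k) : snH H p = 1 := by
  subst hH
  have htrans := hB.isTrans_forcedLT hp
  have htri : Std.Trichotomous (forcedLT H p) := ⟨fun i j hij hji =>
    by_contra fun hne => hij ((forcedLT_iff_not_forcedLT hp hne).2 hji)⟩
  have hirr : Std.Irrefl (forcedLT H p) := ⟨not_forcedLT_self⟩
  have hsto : IsStrictTotalOrder _ (Subrel (forcedLT H p) (· ∉ H)) := {}
  rw [snH_eq_card_relIso hp, Nat.card_eq_one_iff_unique]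
  exact ⟨inferInstance, nonempty_relIso_fin _ (by simp [Fintype.card_subtype_compl])⟩

lemma exists_snH_eq_zero_of_not_isBaxter (hp : Function.Injective p) (hB : ¬ IsBaxter p)
    (hn : k + 3 ≤ n) : ∃ H : Finset (Fin n), #H = k ∧ snH H p = 0 := by
  rw [isBaxter_iff_forall_gap hp] at hB
  simp only [not_forall] at hB
  obtain ⟨a, b, c, hab, hbc, hnot⟩ := hB
  obtain ⟨H, rfl, x, hx, y, hy, z, hz, hxy, hyz, ha, hb, hc⟩ :=
    exists_card_eq_and_card_filter_lt_eq hab hbc (Fin.is_le c) hn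
  obtain rfl : holesBelow H x = a := Fin.ext ha
  obtain rfl : holesBelow H y = b := Fin.ext hb
  obtain rfl : holesBelow H z = c := Fin.ext hc
  refine ⟨H, rfl, ?_⟩
  rw [snH_eq_card_relIso hp, Nat.card_eq_zero]
  refine .inl ⟨fun e => hnot ?_⟩
  have htrans : IsTrans _ (Subrel (forcedLT H p) (· ∉ H)) := e.toRelEmbedding.isTrans
  rw [← forcedLT_iff_of_lt hxy, ← forcedLT_iff_of_lt hyz, ← forcedLT_iff_of_lt (hxy.trans hyz),
    ← forcedLT_iff_of_gt hxy, ← forcedLT_iff_of_gt hyz, ← forcedLT_iff_of_gt (hxy.trans hyz)]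
  exact ⟨htrans.trans ⟨x, hx⟩ ⟨y, hy⟩ ⟨z, hz⟩, htrans.trans ⟨z, hz⟩ ⟨y, hy⟩ ⟨x, hx⟩⟩

end Counting

/-- If `p` of length `k+2` is Baxter then `s_n^k(p) = C(n,k)` for `n ≥ k`;
if not, `s_n^k(p) < C(n,k)` for `n ≥ k+3`. Moreover, all Baxter permutations
of length `k+2` are strongly `k`-Wilf equivalent. -/
theorem baxter_count (k : ℕ) (p : Fin (k + 2) → Fin (k + 2))
    (hp : Function.Bijective p) :
    (IsBaxter p → ∀ n : ℕ, k ≤ n → snk n k p = n.choose k) ∧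
    (¬ IsBaxter p → ∀ n : ℕ, k + 3 ≤ n → snk n k p < n.choose k) ∧
    (∀ q : Fin (k + 2) → Fin (k + 2), Function.Bijective q →
      IsBaxter p → IsBaxter q →
      ∀ (n : ℕ) (H : Finset (Fin n)), H.card = k → snH H p = snH H q) := by
  have hpi := hp.injective
  refine ⟨fun hB n _ => ?_, fun hB n hn => ?_, fun q hq hpB hqB n H hH => ?_⟩
  · calc
      snk n k p = ∑ H ∈ powersetCard k (univ : Finset (Fin n)), snH H p := snk_eq_sum_snH p
      _ = ∑ H ∈ powersetCard k (univ : Finset (Fin n)), 1 :=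
        sum_congr rfl fun H hH => hB.snH_eq_one hpi (mem_powersetCard.1 hH).2
      _ = n.choose k := by simp
  · obtain ⟨H₀, hH₀, hzero⟩ := exists_snH_eq_zero_of_not_isBaxter hpi hB hn
    calc
      snk n k p = ∑ H ∈ powersetCard k (univ : Finset (Fin n)), snH H p := snk_eq_sum_snH p
      _ < ∑ H ∈ powersetCard k (univ : Finset (Fin n)), 1 :=
        sum_lt_sum (fun H hH => snH_le_one hpi (mem_powersetCard.1 hH).2)
          ⟨H₀, mem_powersetCard.2 ⟨subset_univ _, hH₀⟩, by omega⟩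
      _ = n.choose k := by simp
  · rw [hpB.snH_eq_one hpi hH, hqB.snH_eq_one hq.injective hH]
end

section
/- For n ≥ 1, the number of partial permutations of length n with one hole avoiding the pattern 1342 equals binomial(2n−2, n−1) − binomial(2n−2, n−5). -/
open Finset

/-!
Filling the hole suitably creates an occurrence of `1342` exactly when the letters on its two sides
contain the pattern with one letter removed. Insert the letters in increasing order: the places
open to a new maximum are governed by a short label, so the words avoiding `1342` form a generating
tree in which `low s` has the children `low 2, …, low (s + 1), mid 2 s`; `mid k s` has
`mid 2 s, …, mid (k + 1) s` and `s` copies of `high 1`; and `high k` has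
`high 2, …, high (k + 1), high 1`. With `c = 1 + x c²` the Catalan series, the descendants of a word
are counted, according to its label, by `c ^ (s + 1) + x² (c⁶ + ⋯ + c ^ (s + 5))`,
`c ^ k + s x c ^ (k + 2)` and `c ^ (k + 1)` respectively. The root `low 1`, a lone hole, gives
`c² + x² c⁶`; its coefficient at `x ^ m` is
`(C(2m, m) - C(2m, m - 2)) + (C(2m, m - 2) - C(2m, m - 4))`, and `m = n - 1`.
-/

namespace PartialPerm

open scoped List

section Lists

variable {α M : Type*} {l l₁ l₂ L L₁ L₂ : List α} {t : α}

theorem sublist_append_cons (L₁ L₂ : List α) (t : α) : L₁ ++ L₂ <+ L₁ ++ t :: L₂ :=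
  (List.Sublist.refl L₁).append (List.sublist_cons_self t L₂)

theorem sublist_append_of_sublist_append_cons (ht : t ∉ l) (h : l <+ L₁ ++ t :: L₂) :
    l <+ L₁ ++ L₂ := by
  obtain ⟨l₁, l₂, rfl, h₁, h₂⟩ := List.sublist_append_iff.1 h
  refine h₁.append ((List.sublist_cons_iff.1 h₂).resolve_right ?_)
  rintro ⟨r, rfl, -⟩
  simp at ht

theorem append_cons_sublist_append_cons_iff (h₁ : t ∉ L₁) (h₂ : t ∉ L₂) :
    l₁ ++ t :: l₂ <+ L₁ ++ t :: L₂ ↔ l₁ <+ L₁ ∧ l₂ <+ L₂ := by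
  refine ⟨fun h => ?_, fun h => h.1.append (h.2.cons_cons t)⟩
  obtain ⟨r₁, r₂, hr, hl₁, htl₂⟩ := List.append_sublist_iff.1 h
  obtain ⟨s₁, s₂, rfl, ht, hl₂⟩ := List.cons_sublist_iff.1 htl₂
  obtain ⟨u, v, rfl⟩ := List.append_of_mem ht
  rw [List.append_assoc, List.cons_append, ← List.append_assoc,
    List.append_cons_inj_of_notMem h₁ h₂] at hr
  obtain ⟨rfl, -, rfl⟩ := hr
  exact ⟨List.sublist_append_of_sublist_left hl₁, List.sublist_append_of_sublist_right hl₂⟩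

theorem map_some_sublist_map_some_iff : l.map some <+ L.map some ↔ l <+ L :=
  ⟨fun h => by simpa using h.filterMap id, fun h => h.map some⟩

theorem nodup_map_some_append_none (hl : l.Nodup) :
    (l.map some ++ [none]).Nodup := by
  simpa [List.nodup_append] using hl.map (Option.some_injective α)

theorem ofFn_sublist_ofFn_iff {m n : ℕ} {v : Fin m → α} {f : Fin n → α} :
    List.ofFn v <+ List.ofFn f ↔ ∃ g : Fin m → Fin n, StrictMono g ∧ f ∘ g = v := by
  have hv : (List.ofFn v).length = m := List.length_ofFn
  have hf : (List.ofFn f).length = n := List.length_ofFn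
  rw [List.sublist_iff_exists_fin_orderEmbedding_get_eq]
  constructor
  · rintro ⟨g, hg⟩
    refine ⟨fun i => Fin.cast hf (g (Fin.cast hv.symm i)), fun i j hij => g.lt_iff_lt.2 hij,
      funext fun i => ?_⟩
    simpa [Fin.cast] using (hg (Fin.cast hv.symm i)).symm
  · rintro ⟨g, hg, rfl⟩
    refine ⟨OrderEmbedding.ofStrictMono (fun i => Fin.cast hf.symm (g (Fin.cast hv i)))
      fun i j hij => hg hij, fun i => ?_⟩
    simp [Fin.cast]

theorem ofFn_perm_iff_bijective {n : ℕ} {f : Fin n → α} {l : List α} (hl : l.Nodup)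
    (hmem : ∀ x, x ∈ l) : List.ofFn f ~ l ↔ f.Bijective := by
  refine ⟨fun h => ⟨List.nodup_ofFn.1 (h.nodup_iff.2 hl), fun x => ?_⟩, fun h => ?_⟩
  · exact (List.mem_ofFn' f x).1 (h.mem_iff.2 (hmem x))
  · refine (List.perm_ext_iff_of_nodup (List.nodup_ofFn.2 h.injective) hl).2 fun x => ?_
    simpa [hmem] using h.surjective x

theorem permutations'Aux_append_cons (t x : α) (A B : List α) :
    List.permutations'Aux t (A ++ x :: B) =
      (List.permutations'Aux t A).map (· ++ x :: B) ++
        (List.permutations'Aux t B).map (A ++ x :: ·) := by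
  induction A with
  | nil => simp
  | cons y A ih => simp [ih, Function.comp_def]

theorem sum_map_permutations'Aux [AddCommMonoid M] (t : α) (w : List α) (f : List α → M) :
    ((List.permutations'Aux t w).map f).sum =
      ∑ p ∈ range (w.length + 1), f (w.take p ++ t :: w.drop p) := by
  induction w generalizing f with
  | nil => simp
  | cons x w ih =>
    rw [List.length_cons, sum_range_succ']
    simp [ih, Function.comp_def, add_comm]

end Lists

section FiniteOrders

theorem eq_range_card_of_isLowerSet {S : Finset ℕ} (hS : IsLowerSet (S : Set ℕ)) :
    S = range #S := by
  refine eq_of_subset_of_card_le (fun p hp => ?_) (card_range _).le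
  have hsub : range (p + 1) ⊆ S := fun q hq => hS (Nat.lt_succ_iff.1 (mem_range.1 hq)) hp
  simpa using card_le_card hsub

theorem sum_card_filter_le {ι M : Type*} [LinearOrder ι] [AddCommMonoid M]
    (S : Finset ι) (f : ℕ → M) :
    ∑ p ∈ S, f #{q ∈ S | q ≤ p} = ∑ i ∈ range #S, f (i + 1) := by
  induction S using Finset.induction_on_max with
  | empty => simp
  | insert m S hm ih =>
    have hmS : m ∉ S := fun h => (hm m h).false
    have hfilter : ∀ p ∈ S, {q ∈ insert m S | q ≤ p} = {q ∈ S | q ≤ p} := fun p hp => by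
      rw [filter_insert, if_neg (hm p hp).not_ge]
    have hfilter_max : {q ∈ insert m S | q ≤ m} = insert m S :=
      filter_true_of_mem (by simpa using fun q hq => (hm q hq).le)
    rw [sum_insert hmS, hfilter_max, card_insert_of_notMem hmS, sum_range_succ, ← ih, add_comm,
      sum_congr rfl fun p hp => by rw [hfilter p hp]]

theorem exists_strictMono_update {α : Type*} [LinearOrder α] {ℓ : ℕ} {g : Fin (ℓ + 1) → α}
    (hg : StrictMono g) (x : α) : ∃ q, StrictMono (Function.update g q x) := by
  obtain ⟨q, hlt, hgt⟩ : ∃ q, (∀ i < q, g i < x) ∧ ∀ j > q, x < g j := by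
    by_cases hex : ∃ q, x ≤ g q
    · obtain ⟨q, hq, hmin⟩ := WellFounded.has_min wellFounded_lt {q | x ≤ g q} hex
      exact ⟨q, fun i hi => not_le.1 fun hle => hmin i hle hi, fun j hj => hq.trans_lt (hg hj)⟩
    · push Not at hex
      exact ⟨Fin.last ℓ, fun i _ => hex i, fun j hj => absurd hj (Fin.le_last j).not_gt⟩
  refine ⟨q, fun i j hij => ?_⟩
  rcases eq_or_ne i q with rfl | hi
  · simpa [hij.ne'] using hgt j hij
  rcases eq_or_ne j q with rfl | hj
  · simpa [hi] using hlt i hij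
  · simpa [hi, hj] using hg hij

end FiniteOrders

section Counting

open PowerSeries

/-- The shape of a word with a hole that avoids `1342`, up to what matters for inserting a new
maximum: nothing lies left of the hole (`low`), the letters there are at least those right of the
hole (`mid`), or some letter right of the hole is larger than one left of it (`high`). The argument
`k` counts the places left of the hole open to a new maximum, and `s` those right of it. -/
inductive Label where
  | low (s : ℕ)
  | mid (k s : ℕ)
  | high (k : ℕ)

/-- The sum of `F` over the labels of the words obtained by inserting a new maximum into a word with
the given label. -/
def childSum {M : Type*} [AddCommMonoid M] (F : Label → M) : Label → M
  | .low s => ∑ i ∈ range s, F (.low (i + 2)) + F (.mid 2 s)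
  | .mid k s => ∑ i ∈ range k, F (.mid (i + 2) s) + s • F (.high 1)
  | .high k => ∑ i ∈ range k, F (.high (i + 2)) + F (.high 1)

theorem map_childSum {M N : Type*} [AddCommMonoid M] [AddCommMonoid N] (φ : M →+ N)
    (F : Label → M) (σ : Label) : φ (childSum F σ) = childSum (φ ∘ F) σ := by
  cases σ <;> simp [childSum]

theorem coeff_eq_iterate_childSum {A : Type*} [CommSemiring A] {F : Label → A⟦X⟧}
    (hF : ∀ σ, F σ = 1 + X * childSum F σ) (m : ℕ) (σ : Label) :
    coeff m (F σ) = childSum^[m] 1 σ := by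
  induction m generalizing σ with
  | zero => rw [hF]; simp
  | succ m ih =>
    have h : ⇑(coeff (R := A) m) ∘ F = childSum^[m] 1 := funext ih
    rw [hF, map_add, coeff_succ_X_mul, coeff_one, if_neg m.succ_ne_zero, zero_add,
      Function.iterate_succ_apply', ← h]
    exact map_childSum (coeff m).toAddMonoidHom F σ

section CatalanEquation

variable {A : Type*} [CommSemiring A] {x c : A}

theorem mul_sum_pow_add_pow (h : c ^ 2 * x + 1 = c) (k r : ℕ) :
    x * ∑ i ∈ range k, c ^ (i + r + 2) + c ^ r = c ^ (k + r) := by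
  induction k with
  | zero => simp
  | succ k ih =>
    calc x * ∑ i ∈ range (k + 1), c ^ (i + r + 2) + c ^ r
        = x * c ^ (k + r + 2) + (x * ∑ i ∈ range k, c ^ (i + r + 2) + c ^ r) := by
          rw [sum_range_succ]; ring
      _ = c ^ (k + r) * (c ^ 2 * x + 1) := by rw [ih]; ring
      _ = c ^ (k + 1 + r) := by rw [h]; ring

/-- The generating function of the words descended from one with the given label, where `x` marks
the inserted letters and `c` is the Catalan series in `x`. -/
def closedForm (x c : A) : Label → A
  | .low s => c ^ (s + 1) + x ^ 2 * ∑ i ∈ range s, c ^ (i + 6)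
  | .mid k s => c ^ k + s * x * c ^ (k + 2)
  | .high k => c ^ (k + 1)

theorem closedForm_low (h : c ^ 2 * x + 1 = c) (s : ℕ) :
    closedForm x c (.low s) = 1 + x * childSum (closedForm x c) (.low s) := by
  have geom (i : ℕ) : x * ∑ j ∈ range (i + 2), c ^ (j + 6) + c ^ 4 = c ^ (i + 6) :=
    mul_sum_pow_add_pow h (i + 2) 4
  have low_add (i : ℕ) :
      closedForm x c (.low (i + 2)) + x * c ^ 4 = c ^ (i + 3) + x * c ^ (i + 6) := by
    rw [closedForm, ← geom]; ring
  calc closedForm x c (.low s)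
      = (x * ∑ i ∈ range s, c ^ (i + 3) + c ^ 1) + x ^ 2 * ∑ i ∈ range s, c ^ (i + 6) := by
        rw [mul_sum_pow_add_pow h s 1, closedForm]
    _ = 1 + x * (∑ i ∈ range s, (c ^ (i + 3) + x * c ^ (i + 6)) + c ^ 2) := by
        rw [sum_add_distrib, ← mul_sum, pow_one]
        nth_rw 2 [← h]
        ring
    _ = 1 + x * childSum (closedForm x c) (.low s) := by
        simp only [← low_add, sum_add_distrib, sum_const, card_range, childSum, nsmul_eq_mul]
        simp only [closedForm]
        ring

theorem closedForm_mid (h : c ^ 2 * x + 1 = c) (k s : ℕ) :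
    closedForm x c (.mid k s) = 1 + x * childSum (closedForm x c) (.mid k s) := by
  have geom_zero : x * ∑ i ∈ range k, c ^ (i + 2) + 1 = c ^ k := by
    simpa using mul_sum_pow_add_pow h k 0
  simp only [closedForm, childSum, sum_add_distrib, ← mul_sum, nsmul_eq_mul]
  rw [← geom_zero, ← mul_sum_pow_add_pow h k 2]
  ring

theorem closedForm_high (h : c ^ 2 * x + 1 = c) (k : ℕ) :
    closedForm x c (.high k) = 1 + x * childSum (closedForm x c) (.high k) := by
  simp only [closedForm, childSum]
  rw [← mul_sum_pow_add_pow h k 1, pow_one]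
  nth_rw 2 [← h]
  ring

theorem closedForm_eq (h : c ^ 2 * x + 1 = c) (σ : Label) :
    closedForm x c σ = 1 + x * childSum (closedForm x c) σ := by
  cases σ with
  | low s => exact closedForm_low h s
  | mid k s => exact closedForm_mid h k s
  | high k => exact closedForm_high h k

end CatalanEquation

theorem coeff_succ_catalanSeries_pow_succ (m r : ℕ) : coeff (m + 1) (catalanSeries ^ (r + 1)) =
    coeff (m + 1) (catalanSeries ^ r) + coeff m (catalanSeries ^ (r + 2)) := by
  rw [pow_succ]
  nth_rw 2 [← catalanSeries_sq_mul_X_add_one]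
  rw [mul_add, ← mul_assoc, ← pow_add, mul_one, map_add, coeff_succ_mul_X, add_comm]

theorem coeff_succ_catalanSeries_pow (m r : ℕ) :
    coeff (m + 1) (catalanSeries ^ r) + (2 * m + 1 + r).choose m =
      (2 * m + 1 + r).choose (m + 1) := by
  induction m generalizing r with
  | zero =>
    induction r with
    | zero => simp [coeff_one]
    | succ r ih =>
      rw [coeff_succ_catalanSeries_pow_succ]
      simp only [zero_add, mul_zero, Nat.choose_zero_right, Nat.choose_one_right,
        coeff_zero_eq_constantCoeff, map_pow, catalanSeries_constantCoeff, one_pow] at ih ⊢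
      lia
  | succ m ihm =>
    induction r with
    | zero => simpa [coeff_one] using (Nat.choose_symm_half (m + 1)).symm
    | succ r ih =>
      have hm := ihm (r + 2)
      rw [show 2 * m + 1 + (r + 2) = 2 * (m + 1) + 1 + r by ring] at hm
      rw [coeff_succ_catalanSeries_pow_succ, ← add_assoc, Nat.choose_succ_succ',
        Nat.choose_succ_succ']
      lia

theorem coeff_add_two_catalanSeries_sq (n : ℕ) :
    coeff (n + 2) (catalanSeries ^ 2) + (2 * (n + 2)).choose n = (2 * (n + 2)).choose (n + 2) := by
  have h := coeff_succ_catalanSeries_pow (n + 1) 2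
  rw [show 2 * (n + 1) + 1 + 2 = 2 * (n + 2) + 1 by ring, Nat.choose_succ_succ',
    Nat.choose_succ_succ'] at h
  lia

theorem coeff_add_two_catalanSeries_pow_six (n : ℕ) :
    coeff (n + 2) (catalanSeries ^ 6) + (2 * (n + 4)).choose n = (2 * (n + 4)).choose (n + 2) := by
  have h := coeff_succ_catalanSeries_pow (n + 1) 6
  rw [show 2 * (n + 1) + 1 + 6 = 2 * (n + 4) + 1 by ring, Nat.choose_succ_succ',
    Nat.choose_succ_succ'] at h
  lia

theorem iterate_childSum_low_one (n : ℕ) :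
    childSum^[n] 1 (.low 1) = coeff n (catalanSeries ^ 2 + X ^ 2 * catalanSeries ^ 6) := by
  rw [← coeff_eq_iterate_childSum (closedForm_eq catalanSeries_sq_mul_X_add_one)]
  simp [closedForm]

theorem iterate_childSum_low_one_eq_choose (n : ℕ) :
    childSum^[n] 1 (.low 1) + (if 4 ≤ n then (2 * n).choose (n - 4) else 0) =
      (2 * n).choose n := by
  rw [iterate_childSum_low_one, map_add, coeff_X_pow_mul']
  match n with
  | 0 => simp
  | 1 => simpa using coeff_succ_catalanSeries_pow 0 2
  | 2 => simpa using coeff_add_two_catalanSeries_sq 0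
  | 3 =>
    have hsq : coeff 3 (catalanSeries ^ 2) = 14 := by
      simpa [Nat.choose] using coeff_add_two_catalanSeries_sq 1
    have hsix : coeff 1 (catalanSeries ^ 6) = 6 := by
      simpa using coeff_succ_catalanSeries_pow 0 6
    simp [hsq, hsix, Nat.choose]
  | n + 4 =>
    rw [if_pos (by lia), if_pos (by lia), Nat.add_sub_cancel,
      ← coeff_add_two_catalanSeries_sq (n + 2), ← coeff_add_two_catalanSeries_pow_six n]
    exact add_assoc _ _ _


end Counting

section Insertion

variable {α : Type*} [LinearOrder α] {L L₁ L₂ R R₁ R₂ : List α} {t : α}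

/-- A hole with the word `L` to its left and the word `R` to its right avoids `1342` whichever
value fills it. The filled hole may play the role of any letter of the pattern: `2`, `1`, `3`, `4`
in the order of the fields. -/
structure Valid (L R : List α) : Prop where
  not_two : ∀ a b c, a < b → b < c → ¬ [a, b, c] <+ L
  not_one : ∀ a b c, a < b → b < c → ¬ [b, c, a] <+ R
  not_three : ∀ a b c, a < b → b < c → a ∈ L → ¬ [c, b] <+ R
  not_four : ∀ a b c, a < b → b < c → [a, c] <+ L → b ∉ R

/-- A new maximum may be inserted after the prefix `L₁` of the letters left of the hole, `R` being
those right of it. -/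
def LeftOpen (L₁ R : List α) : Prop :=
  L₁.Pairwise (· ≥ ·) ∧ ∀ a ∈ L₁, ∀ b ∈ R, b ≤ a

/-- A new maximum may be inserted between the two parts `R₁`, `R₂` of the letters right of the hole,
as far as these letters are concerned. -/
def RightOpen (R₁ R₂ : List α) : Prop :=
  ∀ c ∈ R₁, ∀ a ∈ R₂, c ≤ a

theorem valid_iff_forall_not_sublist : Valid L R ↔ ∀ (q : Fin 4) (u : Fin 3 → α),
    (∀ a b, u a < u b ↔ (![0, 2, 3, 1] : Fin 4 → Fin 4) (q.succAbove a) <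
      (![0, 2, 3, 1] : Fin 4 → Fin 4) (q.succAbove b)) →
    ¬ ((List.ofFn u).take q <+ L ∧ (List.ofFn u).drop q <+ R) := by
  constructor
  · intro h q u hu
    fin_cases q
    · have h₂₀ : u 2 < u 0 := (hu 2 0).2 (by decide)
      have h₀₁ : u 0 < u 1 := (hu 0 1).2 (by decide)
      simpa using h.not_one _ _ _ h₂₀ h₀₁
    · have h₀₂ : u 0 < u 2 := (hu 0 2).2 (by decide)
      have h₂₁ : u 2 < u 1 := (hu 2 1).2 (by decide)
      simpa using h.not_three _ _ _ h₀₂ h₂₁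
    · have h₀₂ : u 0 < u 2 := (hu 0 2).2 (by decide)
      have h₂₁ : u 2 < u 1 := (hu 2 1).2 (by decide)
      simpa using h.not_four _ _ _ h₀₂ h₂₁
    · have h₀₁ : u 0 < u 1 := (hu 0 1).2 (by decide)
      have h₁₂ : u 1 < u 2 := (hu 1 2).2 (by decide)
      simpa using h.not_two _ _ _ h₀₁ h₁₂
  · intro h
    refine ⟨fun a b c hab hbc hl => h 3 ![a, b, c] ?_ (by simpa using hl),
      fun a b c hab hbc hr => h 0 ![b, c, a] ?_ (by simpa using hr),
      fun a b c hab hbc ha hr => h 1 ![a, c, b] ?_ (by simpa using ⟨ha, hr⟩),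
      fun a b c hab hbc hl hb => h 2 ![a, c, b] ?_ (by simpa using ⟨hl, hb⟩)⟩
    all_goals
      have hac := hab.trans hbc
      simp [Fin.forall_fin_succ, Fin.succAbove, hab, hbc, hac, hab.le, hbc.le, hac.le]
theorem valid_nil : Valid ([] : List α) [] := by
  constructor <;> simp

theorem Valid.mono (h : Valid L₂ R₂) (hL : L₁ <+ L₂) (hR : R₁ <+ R₂) : Valid L₁ R₁ where
  not_two a b c hab hbc hl := h.not_two a b c hab hbc (hl.trans hL)
  not_one a b c hab hbc hr := h.not_one a b c hab hbc (hr.trans hR)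
  not_three a b c hab hbc ha hr := h.not_three a b c hab hbc (hL.subset ha) (hr.trans hR)
  not_four a b c hab hbc hl hb := h.not_four a b c hab hbc (hl.trans hL) (hR.subset hb)

theorem valid_insert_left_iff (hL : ∀ a ∈ L₁ ++ L₂, a < t) (hR : ∀ b ∈ R, b < t) :
    Valid (L₁ ++ t :: L₂) R ↔ Valid (L₁ ++ L₂) R ∧ LeftOpen L₁ R := by
  have hL' : ∀ a ∈ L₁ ++ t :: L₂, a ≤ t := by
    simpa [or_imp, forall_and] using fun a ha => (hL a ha).le
  have ht₁ : t ∉ L₁ := fun h => (hL t (by simp [h])).false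
  have ht₂ : t ∉ L₂ := fun h => (hL t (by simp [h])).false
  have prefix_iff (l : List α) : l ++ [t] <+ L₁ ++ t :: L₂ ↔ l <+ L₁ := by
    simp [append_cons_sublist_append_cons_iff ht₁ ht₂]
  constructor
  · refine fun h => ⟨h.mono (sublist_append_cons L₁ L₂ t) (.refl R), ?_, fun a ha b hb => ?_⟩
    · refine List.pairwise_iff_forall_sublist.2 fun {a b} hab => not_lt.1 fun hlt => ?_
      have hb : b ∈ L₁ := hab.subset (by simp)
      exact h.not_two a b t hlt (hL b (by simp [hb])) ((prefix_iff [a, b]).2 hab)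
    · refine not_lt.1 fun hlt => h.not_four a b t hlt (hR b hb) ?_ hb
      exact (prefix_iff [a]).2 (List.singleton_sublist.2 ha)
  · rintro ⟨h, hpair, hle⟩
    refine ⟨fun a b c hab hbc hl => ?_, h.not_one, fun a b c hab hbc ha hr => ?_,
      fun a b c hab hbc hl hb => ?_⟩
    · have hc : c ≤ t := hL' c (hl.subset (by simp))
      rcases hc.eq_or_lt with rfl | hc
      · exact hab.not_ge (List.pairwise_iff_forall_sublist.1 hpair ((prefix_iff [a, b]).1 hl))
      · refine h.not_two a b c hab hbc (sublist_append_of_sublist_append_cons ?_ hl)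
        simp [hc.ne', (hbc.trans hc).ne', (hab.trans (hbc.trans hc)).ne']
    · have hat : a < t := hab.trans (hR b (hr.subset (by simp)))
      refine h.not_three a b c hab hbc ?_ hr
      simpa [hat.ne] using ha
    · have hc : c ≤ t := hL' c (hl.subset (by simp))
      rcases hc.eq_or_lt with rfl | hc
      · exact hab.not_ge (hle a (List.singleton_sublist.1 ((prefix_iff [a]).1 hl)) b hb)
      · refine h.not_four a b c hab hbc (sublist_append_of_sublist_append_cons ?_ hl) hb
        simp [hc.ne', (hab.trans (hbc.trans hc)).ne']

theorem valid_insert_right_iff (hL : ∀ a ∈ L, a < t) (hR : ∀ b ∈ R₁ ++ R₂, b < t) :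
    Valid L (R₁ ++ t :: R₂) ↔
      Valid L (R₁ ++ R₂) ∧ RightOpen R₁ R₂ ∧ ∀ a ∈ L, ∀ b ∈ R₂, b ≤ a := by
  have hR' : ∀ b ∈ R₁ ++ t :: R₂, b ≤ t := by
    simpa [or_imp, forall_and] using fun b hb => (hR b hb).le
  have ht₁ : t ∉ R₁ := fun h => (hR t (by simp [h])).false
  have ht₂ : t ∉ R₂ := fun h => (hR t (by simp [h])).false
  have split_iff (l r : List α) : l ++ t :: r <+ R₁ ++ t :: R₂ ↔ l <+ R₁ ∧ r <+ R₂ :=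
    append_cons_sublist_append_cons_iff ht₁ ht₂
  constructor
  · refine fun h => ⟨h.mono (.refl L) (sublist_append_cons R₁ R₂ t), fun b hb a ha => ?_,
      fun a ha b hb => not_lt.1 fun hlt => ?_⟩
    · refine not_lt.1 fun hlt => h.not_one a b t hlt (hR b (by simp [hb])) ?_
      exact (split_iff [b] [a]).2 ⟨List.singleton_sublist.2 hb, List.singleton_sublist.2 ha⟩
    · refine h.not_three a b t hlt (hR b (by simp [hb])) ha ?_
      exact (split_iff [] [b]).2 ⟨List.nil_sublist _, List.singleton_sublist.2 hb⟩
  · rintro ⟨h, hopen, hle⟩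
    refine ⟨h.not_two, fun a b c hab hbc hr => ?_, fun a b c hab hbc ha hr => ?_,
      fun a b c hab hbc hl hb => ?_⟩
    · have hc : c ≤ t := hR' c (hr.subset (by simp))
      rcases hc.eq_or_lt with rfl | hc
      · obtain ⟨hb, ha⟩ := (split_iff [b] [a]).1 hr
        exact hab.not_ge (hopen b (List.singleton_sublist.1 hb) a (List.singleton_sublist.1 ha))
      · refine h.not_one a b c hab hbc (sublist_append_of_sublist_append_cons ?_ hr)
        simp [hc.ne', (hbc.trans hc).ne', (hab.trans (hbc.trans hc)).ne']
    · have hc : c ≤ t := hR' c (hr.subset (by simp))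
      rcases hc.eq_or_lt with rfl | hc
      · exact hab.not_ge (hle a ha b (List.singleton_sublist.1 ((split_iff [] [b]).1 hr).2))
      · refine h.not_three a b c hab hbc ha (sublist_append_of_sublist_append_cons ?_ hr)
        simp [hc.ne', (hbc.trans hc).ne']
    · have hbt : b < t := hbc.trans (hL c (hl.subset (by simp)))
      refine h.not_four a b c hab hbc hl ?_
      simpa [hbt.ne] using hb

end Insertion

section Sites

variable {α : Type*} [LinearOrder α] {L L₁ L₂ R R₁ R₂ : List α} {t : α} {p : ℕ}

open scoped Classical in
/-- The positions among the letters left of the hole where a new maximum may be inserted. -/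
noncomputable def leftSites (L R : List α) : Finset ℕ :=
  {p ∈ range (L.length + 1) | LeftOpen (L.take p) R}

open scoped Classical in
/-- The positions among the letters right of the hole where a new maximum may be inserted, as far as
these letters are concerned. -/
noncomputable def rightSites (R : List α) : Finset ℕ :=
  {p ∈ range (R.length + 1) | RightOpen (R.take p) (R.drop p)}

theorem mem_leftSites : p ∈ leftSites L R ↔ p ≤ L.length ∧ LeftOpen (L.take p) R := by
  simp [leftSites]

theorem mem_rightSites : p ∈ rightSites R ↔ p ≤ R.length ∧ RightOpen (R.take p) (R.drop p) := by
  simp [rightSites]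

theorem leftOpen_nil (R : List α) : LeftOpen [] R := by
  simp [LeftOpen]

theorem LeftOpen.sublist (h : LeftOpen L₂ R) (hL : L₁ <+ L₂) : LeftOpen L₁ R :=
  ⟨h.1.sublist hL, fun a ha => h.2 a (hL.subset ha)⟩

theorem leftOpen_cons_iff (hL : ∀ a ∈ L, a < t) (hR : ∀ b ∈ R, b < t) :
    LeftOpen (t :: L) R ↔ LeftOpen L R := by
  have hL' : ∀ a ∈ L, t ≥ a := fun a ha => (hL a ha).le
  have hR' : ∀ b ∈ R, b ≤ t := fun b hb => (hR b hb).le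
  simp only [LeftOpen, List.pairwise_cons, List.forall_mem_cons]
  tauto

theorem zero_mem_leftSites (L R : List α) : 0 ∈ leftSites L R :=
  mem_leftSites.2 ⟨Nat.zero_le _, leftOpen_nil R⟩

theorem isLowerSet_leftSites (L R : List α) : IsLowerSet (leftSites L R : Set ℕ) := by
  intro p q hqp hp
  rw [mem_coe, mem_leftSites] at hp ⊢
  exact ⟨hqp.trans hp.1, hp.2.sublist (List.take_sublist_take_left hqp)⟩

theorem leftSites_eq_range (L R : List α) : leftSites L R = range #(leftSites L R) :=
  eq_range_card_of_isLowerSet (isLowerSet_leftSites L R)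

theorem card_leftSites_cons (hL : ∀ a ∈ L, a < t) (hR : ∀ b ∈ R, b < t) :
    #(leftSites (t :: L) R) = #(leftSites L R) + 1 := by
  classical
  have htake (p : ℕ) : LeftOpen (t :: L.take p) R ↔ LeftOpen (L.take p) R :=
    leftOpen_cons_iff (fun a ha => hL a (List.mem_of_mem_take ha)) hR
  rw [leftSites, card_filter, List.length_cons, sum_range_succ', leftSites, card_filter]
  simp only [List.take_succ_cons, htake, List.take_zero, leftOpen_nil, if_true]

theorem leftSites_insert_left (hL : ∀ a ∈ L₁, a < t) (hne : L₁ ≠ []) (hopen : LeftOpen L₁ R) :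
    leftSites (L₁ ++ t :: L₂) R = range (L₁.length + 1) := by
  ext p
  rw [mem_leftSites, mem_range, Nat.lt_succ_iff]
  constructor
  · rintro ⟨-, hp⟩
    by_contra! hlt
    obtain ⟨a, ha⟩ := List.exists_mem_of_ne_nil L₁ hne
    obtain ⟨k, rfl⟩ := Nat.exists_eq_add_of_lt hlt
    have hat : [a, t] <+ (L₁ ++ t :: L₂).take (L₁.length + k + 1) := by
      rw [add_assoc, List.take_length_add_append, List.take_succ_cons]
      exact (List.singleton_sublist.2 ha).append (List.singleton_sublist.2 List.mem_cons_self)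
    exact (hL a ha).not_ge (List.pairwise_iff_forall_sublist.1 hp.1 hat)
  · intro hp
    rw [List.take_append_of_le_length hp]
    exact ⟨hp.trans (by simp), hopen.sublist (List.take_sublist _ _)⟩

theorem leftSites_insert_right (hL : ∀ a ∈ L, a < t) : leftSites L (R₁ ++ t :: R₂) = {0} := by
  ext p
  rw [mem_leftSites, mem_singleton]
  refine ⟨fun ⟨_, hopen⟩ => ?_, ?_⟩
  · by_contra h0
    obtain ⟨a, ha⟩ : ∃ a, a ∈ L.take p :=
      List.exists_mem_of_length_pos (by rw [List.length_take]; lia)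
    exact (hL a (List.mem_of_mem_take ha)).not_ge (hopen.2 a ha t (by simp))
  · rintro rfl
    exact ⟨Nat.zero_le _, leftOpen_nil _⟩

theorem rightOpen_insert_right_iff (hR : ∀ b ∈ R, b < t) :
    RightOpen R (R₁ ++ t :: R₂) ↔ RightOpen R (R₁ ++ R₂) := by
  have hR' : ∀ b ∈ R, b ≤ t := fun b hb => (hR b hb).le
  simp only [RightOpen, List.forall_mem_append, List.forall_mem_cons]
  exact forall₂_congr fun b hb => by simp [hR' b hb]

theorem rightOpen_insert_left_iff (hR : ∀ b ∈ R, b < t) :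
    RightOpen (R₁ ++ t :: R₂) R ↔ R = [] := by
  refine ⟨fun h => List.eq_nil_iff_forall_not_mem.2 fun b hb => ?_, ?_⟩
  · exact (hR b hb).not_ge (h t (by simp) b hb)
  · rintro rfl
    simp [RightOpen]

theorem rightSites_insert (hR : ∀ b ∈ R₁ ++ R₂, b < t) :
    rightSites (R₁ ++ t :: R₂) =
      insert (R₁.length + R₂.length + 1) {p ∈ rightSites (R₁ ++ R₂) | p ≤ R₁.length} := by
  ext p
  rw [mem_rightSites, mem_insert, mem_filter, mem_rightSites]
  rcases le_or_gt p R₁.length with hp | hp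
  · have hopen : RightOpen ((R₁ ++ t :: R₂).take p) ((R₁ ++ t :: R₂).drop p) ↔
        RightOpen ((R₁ ++ R₂).take p) ((R₁ ++ R₂).drop p) := by
      rw [List.take_append_of_le_length hp, List.take_append_of_le_length hp,
        List.drop_append_of_le_length hp, List.drop_append_of_le_length hp]
      exact rightOpen_insert_right_iff
        (fun b hb => hR b (List.mem_append_left _ (List.mem_of_mem_take hb)))
    rw [hopen, List.length_append, List.length_append, List.length_cons]
    lia
  · obtain ⟨k, rfl⟩ := Nat.exists_eq_add_of_lt hp
    have hopen : RightOpen ((R₁ ++ t :: R₂).take (R₁.length + k + 1))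
        ((R₁ ++ t :: R₂).drop (R₁.length + k + 1)) ↔ R₂.length ≤ k := by
      rw [add_assoc, List.take_length_add_append, List.drop_length_add_append, List.take_succ_cons,
        List.drop_succ_cons, rightOpen_insert_left_iff, List.drop_eq_nil_iff]
      exact fun b hb => hR b (List.mem_append_right _ (List.mem_of_mem_drop hb))
    rw [hopen, List.length_append, List.length_append, List.length_cons]
    lia

end Sites

section Labels

variable {α M : Type*} [LinearOrder α] [AddCommMonoid M] {L L₁ L₂ R R₁ R₂ : List α} {t : α} {p : ℕ}

/-- Some letter left of the hole is smaller than some letter right of it. -/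
def HasAscent (L R : List α) : Prop :=
  ∃ a ∈ L, ∃ b ∈ R, a < b

open scoped Classical in
/-- The `Label` of the word with a hole that has `L` left of the hole and `R` right of it. It is
meaningful if `Valid L R`. -/
noncomputable def label (L R : List α) : Label :=
  if L = [] then .low #(rightSites R)
  else if HasAscent L R then .high #(leftSites L R)
  else .mid #(leftSites L R) #(rightSites R)

open scoped Classical in
/-- The value of `F` at the label of a valid pair of words, and `0` for other pairs. -/
noncomputable def weight (F : Label → M) (L R : List α) : M :=
  if Valid L R then F (label L R) else 0

theorem hasAscent_insert_left_iff (hR : ∀ b ∈ R, b < t) :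
    HasAscent (L₁ ++ t :: L₂) R ↔ HasAscent (L₁ ++ L₂) R := by
  have ht : ¬ ∃ b ∈ R, t < b := fun ⟨b, hb, htb⟩ => htb.asymm (hR b hb)
  simp [HasAscent, or_and_right, exists_or, ht]

theorem label_nil (R : List α) : label [] R = .low #(rightSites R) :=
  if_pos rfl

theorem label_of_hasAscent (h : HasAscent L R) : label L R = .high #(leftSites L R) := by
  have hL : L ≠ [] := by
    rintro rfl
    simp [HasAscent] at h
  rw [label, if_neg hL, if_pos h]

theorem label_of_not_hasAscent (hL : L ≠ []) (h : ¬ HasAscent L R) :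
    label L R = .mid #(leftSites L R) #(rightSites R) := by
  rw [label, if_neg hL, if_neg h]

theorem label_insert_right (hL : ∀ a ∈ L, a < t) (hne : L ≠ []) :
    label L (R₁ ++ t :: R₂) = .high 1 := by
  obtain ⟨a, ha⟩ := List.exists_mem_of_ne_nil L hne
  rw [label_of_hasAscent ⟨a, ha, t, by simp, hL a ha⟩, leftSites_insert_right hL, card_singleton]

theorem sum_card_leftSites_insert (hL : ∀ a ∈ L, a < t) (hR : ∀ b ∈ R, b < t) (f : ℕ → M) :
    ∑ p ∈ leftSites L R, f #(leftSites (L.take p ++ t :: L.drop p) R) =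
      ∑ i ∈ range #(leftSites L R), f (i + 2) := by
  obtain ⟨k, hk⟩ : ∃ k, #(leftSites L R) = k + 1 :=
    Nat.exists_eq_succ_of_ne_zero (card_ne_zero_of_mem (zero_mem_leftSites L R))
  have hsites : leftSites L R = range (k + 1) := by rw [leftSites_eq_range, hk]
  have hcard_succ : ∀ p ∈ range k, #(leftSites (L.take (p + 1) ++ t :: L.drop (p + 1)) R) = p + 2 :=
    fun p hp => by
    have hmem : p + 1 ∈ leftSites L R := by simpa [hsites] using hp
    obtain ⟨hle, hopen⟩ := mem_leftSites.1 hmem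
    have hlen : (L.take (p + 1)).length = p + 1 := List.length_take_of_le hle
    rw [leftSites_insert_left (fun a ha => hL a (List.mem_of_mem_take ha))
      (List.ne_nil_of_length_eq_add_one hlen) hopen, card_range, hlen]
  rw [hk, hsites, sum_range_succ', sum_range_succ,
    sum_congr rfl fun p hp => by rw [hcard_succ p hp]]
  simp [card_leftSites_cons hL hR, hk]

theorem card_rightSites_insert (hR : ∀ b ∈ R, b < t) (hp : p ≤ R.length) :
    #(rightSites (R.take p ++ t :: R.drop p)) = #{q ∈ rightSites R | q ≤ p} + 1 := by
  rw [rightSites_insert (by simpa using hR), card_insert_of_notMem]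
  · simp [hp]
  · simp [hp]

theorem sum_weight_insert_left (hL : ∀ a ∈ L, a < t) (hR : ∀ b ∈ R, b < t) (h : Valid L R)
    (F : Label → M) :
    ∑ p ∈ range (L.length + 1), weight F (L.take p ++ t :: L.drop p) R =
      ∑ p ∈ leftSites L R, F (label (L.take p ++ t :: L.drop p) R) := by
  classical
  rw [leftSites, sum_filter]
  refine sum_congr rfl fun p _ => ?_
  have hvalid : Valid (L.take p ++ t :: L.drop p) R ↔ LeftOpen (L.take p) R := by
    rw [valid_insert_left_iff (by simpa using hL) hR, List.take_append_drop, and_iff_right h]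
  simp only [weight, hvalid]

open scoped Classical in
theorem sum_weight_insert_right (hL : ∀ a ∈ L, a < t) (hR : ∀ b ∈ R, b < t) (h : Valid L R)
    (F : Label → M) :
    ∑ p ∈ range (R.length + 1), weight F L (R.take p ++ t :: R.drop p) =
      ∑ p ∈ rightSites R with ∀ a ∈ L, ∀ b ∈ R.drop p, b ≤ a,
        F (label L (R.take p ++ t :: R.drop p)) := by
  rw [rightSites, filter_filter, sum_filter]
  refine sum_congr rfl fun p _ => ?_
  have hvalid : Valid L (R.take p ++ t :: R.drop p) ↔
      RightOpen (R.take p) (R.drop p) ∧ ∀ a ∈ L, ∀ b ∈ R.drop p, b ≤ a := by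
    rw [valid_insert_right_iff hL (by simpa using hR), List.take_append_drop, and_iff_right h]
  simp only [weight, hvalid]

theorem sum_weight_insert_right_nil (hR : ∀ b ∈ R, b < t) (h : Valid [] R) (F : Label → M) :
    ∑ p ∈ range (R.length + 1), weight F [] (R.take p ++ t :: R.drop p) =
      ∑ i ∈ range #(rightSites R), F (.low (i + 2)) := by
  classical
  rw [sum_weight_insert_right (by simp) hR h, filter_true_of_mem (by simp),
    ← sum_card_filter_le _ fun i => F (.low (i + 1))]
  refine sum_congr rfl fun p hp => ?_
  rw [label_nil, card_rightSites_insert hR (mem_rightSites.1 hp).1]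

theorem sum_weight_insert_right_of_hasAscent (hL : ∀ a ∈ L, a < t) (hR : ∀ b ∈ R, b < t)
    (h : Valid L R) (hasc : HasAscent L R) (F : Label → M) :
    ∑ p ∈ range (R.length + 1), weight F L (R.take p ++ t :: R.drop p) = F (.high 1) := by
  classical
  obtain ⟨a, ha, c, hc, hac⟩ := hasc
  have hsites : {p ∈ rightSites R | ∀ a ∈ L, ∀ b ∈ R.drop p, b ≤ a} = {R.length} := by
    ext p
    rw [mem_filter, mem_rightSites, mem_singleton]
    refine ⟨fun ⟨⟨hp, hopen⟩, hle⟩ => ?_, ?_⟩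
    · have hc' : c ∈ R.take p := by
        rw [← List.take_append_drop p R, List.mem_append] at hc
        exact hc.resolve_right fun hcd => hac.not_ge (hle a ha c hcd)
      have hdrop : R.drop p = [] := List.eq_nil_iff_forall_not_mem.2 fun b hb =>
        hac.not_ge ((hopen c hc' b hb).trans (hle a ha b hb))
      exact hp.antisymm (List.drop_eq_nil_iff.1 hdrop)
    · rintro rfl
      simp [RightOpen]
  rw [sum_weight_insert_right hL hR h, hsites, sum_singleton,
    label_insert_right hL (List.ne_nil_of_mem ha)]

theorem sum_weight_insert_right_of_not_hasAscent (hL : ∀ a ∈ L, a < t) (hR : ∀ b ∈ R, b < t)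
    (h : Valid L R) (hne : L ≠ []) (hasc : ¬ HasAscent L R) (F : Label → M) :
    ∑ p ∈ range (R.length + 1), weight F L (R.take p ++ t :: R.drop p) =
      #(rightSites R) • F (.high 1) := by
  classical
  have hle (p : ℕ) : ∀ a ∈ L, ∀ b ∈ R.drop p, b ≤ a := fun a ha b hb =>
    not_lt.1 fun hab => hasc ⟨a, ha, b, List.mem_of_mem_drop hb, hab⟩
  simp only [sum_weight_insert_right hL hR h, filter_true_of_mem fun p _ => hle p,
    label_insert_right hL hne, sum_const]

theorem sum_weight_insert_of_valid (hL : ∀ a ∈ L, a < t) (hR : ∀ b ∈ R, b < t) (h : Valid L R)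
    (F : Label → M) :
    ∑ p ∈ range (L.length + 1), weight F (L.take p ++ t :: L.drop p) R +
      ∑ p ∈ range (R.length + 1), weight F L (R.take p ++ t :: R.drop p) =
    childSum F (label L R) := by
  have hasc_iff (p : ℕ) : HasAscent (L.take p ++ t :: L.drop p) R ↔ HasAscent L R := by
    rw [hasAscent_insert_left_iff hR, List.take_append_drop]
  rw [sum_weight_insert_left hL hR h]
  by_cases hasc : HasAscent L R
  · rw [sum_weight_insert_right_of_hasAscent hL hR h hasc, label_of_hasAscent hasc, childSum,
      ← sum_card_leftSites_insert hL hR fun i => F (.high i)]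
    simp only [label_of_hasAscent ((hasc_iff _).2 hasc)]
  have hlabel (p : ℕ) : label (L.take p ++ t :: L.drop p) R =
      .mid #(leftSites (L.take p ++ t :: L.drop p) R) #(rightSites R) :=
    label_of_not_hasAscent (by simp) ((hasc_iff p).not.2 hasc)
  simp only [hlabel, sum_card_leftSites_insert hL hR fun i => F (.mid i #(rightSites R))]
  by_cases hne : L = []
  · subst hne
    have hcard : #(leftSites ([] : List α) R) = 1 := by simp [leftSites, leftOpen_nil]
    rw [sum_weight_insert_right_nil hR h, label_nil, childSum, hcard, sum_range_one, add_comm]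
  · rw [sum_weight_insert_right_of_not_hasAscent hL hR h hne hasc, label_of_not_hasAscent hne hasc,
      childSum]

theorem sum_weight_insert (hL : ∀ a ∈ L, a < t) (hR : ∀ b ∈ R, b < t) (F : Label → M) :
    ∑ p ∈ range (L.length + 1), weight F (L.take p ++ t :: L.drop p) R +
      ∑ p ∈ range (R.length + 1), weight F L (R.take p ++ t :: R.drop p) =
    weight (childSum F) L R := by
  by_cases h : Valid L R
  · rw [sum_weight_insert_of_valid hL hR h, weight, if_pos h]
  · have hleft (p : ℕ) : ¬ Valid (L.take p ++ t :: L.drop p) R := fun hp => h <| by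
      simpa using hp.mono (sublist_append_cons _ _ t) (.refl R)
    have hright (p : ℕ) : ¬ Valid L (R.take p ++ t :: R.drop p) := fun hp => h <| by
      simpa using hp.mono (.refl L) (sublist_append_cons _ _ t)
    simp [weight, h, hleft, hright]

end Labels

section Words

variable {α M : Type*} {l r L R : List α} {t : α}

/-- The word with a hole, the letters of `L` left of it and those of `R` right of it. -/
def holeWord (L R : List α) : List (Option α) :=
  L.map some ++ none :: R.map some

/-- The letters of `w` that precede its first hole. -/
def lettersLeft (w : List (Option α)) : List α :=
  (w.takeWhile Option.isSome).reduceOption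

/-- The letters of `w` that follow its first hole. -/
def lettersRight (w : List (Option α)) : List α :=
  (w.dropWhile Option.isSome).reduceOption

@[simp]
theorem lettersLeft_holeWord (L R : List α) : lettersLeft (holeWord L R) = L := by
  induction L <;> simp_all [lettersLeft, holeWord]

@[simp]
theorem lettersRight_holeWord (L R : List α) : lettersRight (holeWord L R) = R := by
  induction L <;> simp_all [lettersRight, holeWord, List.reduceOption]

theorem exists_eq_holeWord_of_perm {w : List (Option α)} (hw : w ~ l.map some ++ [none]) :
    ∃ L R, w = holeWord L R ∧ L ++ R ~ l := by
  obtain ⟨A, B, rfl⟩ := List.append_of_mem (hw.mem_iff.2 (by simp : none ∈ l.map some ++ [none]))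
  have hAB : A ++ B ~ l.map some :=
    (List.perm_middle.symm.trans (hw.trans (List.perm_append_singleton _ _))).cons_inv
  obtain ⟨l', hl', hperm⟩ := (List.eq_map_comp_perm some).ge _ _ hAB
  obtain ⟨L, R, rfl, rfl, rfl⟩ := List.append_eq_map_iff.1 hl'
  exact ⟨L, R, rfl, hperm⟩

theorem holeWord_sublist_holeWord_iff : holeWord l r <+ holeWord L R ↔ l <+ L ∧ r <+ R := by
  rw [holeWord, holeWord, append_cons_sublist_append_cons_iff (by simp) (by simp),
    map_some_sublist_map_some_iff, map_some_sublist_map_some_iff]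

theorem ofFn_insertNth_none {ℓ : ℕ} (q : Fin (ℓ + 1)) (u : Fin ℓ → α) :
    List.ofFn (q.insertNth (α := fun _ => Option α) none (some ∘ u)) =
      holeWord ((List.ofFn u).take q) ((List.ofFn u).drop q) := by
  induction ℓ with
  | zero =>
    rw [Subsingleton.elim (α := Fin 1) q 0]
    simp [holeWord]
  | succ ℓ ih =>
    cases q using Fin.cases with
    | zero => simp [holeWord, List.map_ofFn, Function.comp_def]
    | succ q =>
      have hu : some ∘ u = Fin.cons (some (u 0)) (some ∘ Fin.tail u) := by
        rw [← Fin.comp_cons, Fin.cons_self_tail]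
      rw [hu, Fin.insertNth_succ_cons, List.ofFn_cons, ih, List.ofFn_succ]
      rfl

variable [LinearOrder α] [AddCommMonoid M]

theorem sum_weight_permutations'Aux_holeWord (hL : ∀ a ∈ L, a < t) (hR : ∀ b ∈ R, b < t)
    (F : Label → M) :
    ((List.permutations'Aux (some t) (holeWord L R)).map
      fun w => weight F (lettersLeft w) (lettersRight w)).sum = weight (childSum F) L R := by
  have hleft (p : ℕ) :
      (L.map some).take p ++ some t :: (L.map some).drop p ++ none :: R.map some =
        holeWord (L.take p ++ t :: L.drop p) R := by
    simp [holeWord]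
  have hright (p : ℕ) :
      L.map some ++ none :: ((R.map some).take p ++ some t :: (R.map some).drop p) =
        holeWord L (R.take p ++ t :: R.drop p) := by
    simp [holeWord]
  rw [holeWord, permutations'Aux_append_cons, List.map_append, List.sum_append, List.map_map,
    List.map_map, sum_map_permutations'Aux, sum_map_permutations'Aux, ← sum_weight_insert hL hR F]
  simp only [Function.comp_apply, hleft, hright, lettersLeft_holeWord, lettersRight_holeWord,
    List.length_map]

-- `permutations'` inserts the head of a list, here its maximum, into the permutations of the tail.
theorem sum_weight_permutations' (hl : l.Pairwise (· > ·)) (F : Label → M) :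
    ((l.map some ++ [none]).permutations'.map
      fun w => weight F (lettersLeft w) (lettersRight w)).sum = childSum^[l.length] F (.low 1) := by
  induction l generalizing F with
  | nil =>
    have hweight : weight F ([] : List α) [] = F (.low 1) := by
      rw [weight, if_pos valid_nil, label_nil]
      simp [rightSites, RightOpen]
    simpa [lettersLeft, lettersRight] using hweight
  | cons t l ih =>
    obtain ⟨ht, hl⟩ := List.pairwise_cons.1 hl
    rw [List.length_cons, Function.iterate_succ_apply, ← ih hl]
    rw [List.map_cons, List.cons_append, List.permutations', List.map_flatMap,
      List.flatMap_def, List.sum_flatten, List.map_map]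
    refine congrArg List.sum (List.map_congr_left fun w hw => ?_)
    obtain ⟨L, R, rfl, hLR⟩ := exists_eq_holeWord_of_perm (List.mem_permutations'.1 hw)
    have hlt : ∀ a ∈ L ++ R, a < t := fun a ha => ht a (hLR.mem_iff.1 ha)
    have hltL : ∀ a ∈ L, a < t := fun a ha => hlt a (List.mem_append_left R ha)
    have hltR : ∀ b ∈ R, b < t := fun b hb => hlt b (List.mem_append_right L hb)
    rw [Function.comp_apply, sum_weight_permutations'Aux_holeWord hltL hltR,
      lettersLeft_holeWord, lettersRight_holeWord]

theorem card_valid_words (hl : l.Pairwise (· > ·)) :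
    Nat.card {w : List (Option α) // w ~ l.map some ++ [none] ∧
      Valid (lettersLeft w) (lettersRight w)} = childSum^[l.length] 1 (.low 1) := by
  classical
  have hnodup : (l.map some ++ [none]).permutations'.Nodup :=
    (List.permutations_perm_permutations' _).nodup_iff.1
      (List.nodup_permutations _ (nodup_map_some_append_none (hl.imp ne_of_gt)))
  rw [← sum_weight_permutations' hl, ← List.sum_toFinset _ hnodup]
  simp only [weight, Pi.one_apply, ← card_filter]
  exact Nat.subtype_card _ (by simp)

end Words

section HoleOccurrences

variable {N ℓ : ℕ} {β : Type*} [LinearOrder β] {π : Fin (N + 1) → Option (Fin N)}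
  {p : Fin (ℓ + 1) → β}

/-- The hole of `π`, in the role of the letter of `p` at position `q`, completes an occurrence of
`p` if it is filled suitably. -/
def HoleOccurrence (π : Fin (N + 1) → Option (Fin N)) (p : Fin (ℓ + 1) → β) (q : Fin (ℓ + 1)) :
    Prop :=
  ∃ g : Fin (ℓ + 1) → Fin (N + 1), StrictMono g ∧ ∃ u : Fin ℓ → Fin N,
    π ∘ g = q.insertNth none (some ∘ u) ∧
      ∀ a b, u a < u b ↔ p (q.succAbove a) < p (q.succAbove b)

/-- The extension of `π` that fills the hole with `v`. -/
noncomputable def fillHole (hπ : π.Bijective) (v : Fin (N + 1)) : Equiv.Perm (Fin (N + 1)) :=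
  (Equiv.ofBijective π hπ).trans (finSuccEquiv' v).symm

theorem fillHole_of_eq_none (hπ : π.Bijective) (v : Fin (N + 1)) {i : Fin (N + 1)}
    (hi : π i = none) : fillHole hπ v i = v := by
  simp [fillHole, hi]

theorem fillHole_of_eq_some (hπ : π.Bijective) (v : Fin (N + 1)) {i : Fin (N + 1)} {x : Fin N}
    (hi : π i = some x) : fillHole hπ v i = v.succAbove x := by
  simp [fillHole, hi]

theorem isExtension_fillHole (hπ : π.Bijective) (v : Fin (N + 1)) :
    IsExtension (fillHole hπ v) π := fun i j x y hi hj => by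
  rw [fillHole_of_eq_some hπ v hi, fillHole_of_eq_some hπ v hj, Fin.succAbove_lt_succAbove_iff]

theorem exists_castSucc_lt_iff {u : Fin ℓ → Fin N} {r : Fin ℓ → β}
    (hur : ∀ a b, u a < u b ↔ r a < r b) (y : β) :
    ∃ v : Fin (N + 1), ∀ a, (u a).castSucc < v ↔ r a < y := by
  classical
  refine ⟨({a | r a < y} : Finset (Fin ℓ)).sup fun a => (u a).succ, fun b => ?_⟩
  rw [Finset.lt_sup_iff]
  simp only [mem_filter, mem_univ, true_and, Fin.castSucc_lt_succ_iff]
  refine ⟨fun ⟨a, ha, hba⟩ => lt_of_le_of_lt ?_ ha, fun hb => ⟨b, hb, le_rfl⟩⟩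
  exact not_lt.1 ((hur a b).not.1 hba.not_gt)

theorem HoleOccurrence.not_ppAvoids (hπ : π.Bijective) (hp : p.Injective) {q : Fin (ℓ + 1)}
    (h : HoleOccurrence π p q) : ¬ PPAvoids π p := by
  obtain ⟨g, hg, u, hgu, hup⟩ := h
  obtain ⟨v, hv⟩ := exists_castSucc_lt_iff hup (p q)
  have hq : fillHole hπ v (g q) = v :=
    fillHole_of_eq_none hπ v (by simpa using congrFun hgu q)
  have hsucc (a : Fin ℓ) : fillHole hπ v (g (q.succAbove a)) = v.succAbove (u a) :=
    fillHole_of_eq_some hπ v (by simpa using congrFun hgu (q.succAbove a))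
  refine fun havoid => havoid _ (isExtension_fillHole hπ v) ⟨g, hg, ?_⟩
  rw [Fin.forall_iff_succAbove q]
  refine ⟨(Fin.forall_iff_succAbove q).2 ⟨by simp, fun b => ?_⟩, fun a =>
    (Fin.forall_iff_succAbove q).2 ⟨?_, fun b => ?_⟩⟩
  · have hne : p (q.succAbove b) ≠ p q := hp.ne (Fin.succAbove_ne q b)
    rw [hq, hsucc, Fin.lt_succAbove_iff_le_castSucc, ← not_lt, hv, not_lt, hne.symm.le_iff_lt]
  · rw [hq, hsucc, Fin.succAbove_lt_iff_castSucc_lt, hv]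
  · rw [hsucc, hsucc, Fin.succAbove_lt_succAbove_iff, hup]

theorem exists_holeOccurrence_of_containsPat (hπ : π.Bijective) {σ : Equiv.Perm (Fin (N + 1))}
    (hσ : IsExtension σ π) (h : ContainsPat σ p) : ∃ q, HoleOccurrence π p q := by
  obtain ⟨g, hg, hgp⟩ := h
  obtain ⟨i, hi⟩ := hπ.surjective none
  obtain ⟨q, hq⟩ := exists_strictMono_update hg i
  have hsome (a : Fin ℓ) : ∃ x, π (g (q.succAbove a)) = some x := by
    refine Option.ne_none_iff_exists'.1 fun hnone => ?_
    have hne : g (q.succAbove a) ≠ i := by simpa using hq.injective.ne (Fin.succAbove_ne q a)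
    exact hne (hπ.injective (hnone.trans hi.symm))
  choose u hu using hsome
  refine ⟨q, _, hq, u, ?_, fun a b => ?_⟩
  · refine Fin.eq_insertNth_iff.2 ⟨by simp [hi], funext fun a => ?_⟩
    simp [Fin.removeNth, hu]
  · rw [← hσ _ _ _ _ (hu a) (hu b), hgp]

theorem ppAvoids_iff_forall_not_holeOccurrence (hπ : π.Bijective) (hp : p.Injective) :
    PPAvoids π p ↔ ∀ q, ¬ HoleOccurrence π p q :=
  ⟨fun h _ hq => hq.not_ppAvoids hπ hp h, fun h _ hσ hpat =>
    (exists_holeOccurrence_of_containsPat hπ hσ hpat).elim h⟩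

theorem holeOccurrence_iff_ofFn_sublist (q : Fin (ℓ + 1)) : HoleOccurrence π p q ↔
    ∃ u : Fin ℓ → Fin N, (∀ a b, u a < u b ↔ p (q.succAbove a) < p (q.succAbove b)) ∧
      List.ofFn (q.insertNth (α := fun _ => Option (Fin N)) none (some ∘ u)) <+ List.ofFn π := by
  simp only [HoleOccurrence, ofFn_sublist_ofFn_iff]
  tauto

end HoleOccurrences

section Translation

variable {N : ℕ} {π : Fin (N + 1) → Option (Fin N)}

theorem isPPerm_one_iff : IsPPerm (n := N + 1) 1 π ↔ π.Bijective := by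
  rw [Function.bijective_iff_existsUnique, Option.forall, IsPPerm, Finset.card_eq_one,
    Finset.singleton_iff_unique_mem]
  simp

theorem ofFn_perm_finRange_iff :
    List.ofFn π ~ (List.finRange N).reverse.map some ++ [none] ↔ π.Bijective :=
  ofFn_perm_iff_bijective
    (nodup_map_some_append_none (List.nodup_reverse.2 (List.nodup_finRange N)))
    (Option.forall.2 (by simp))

theorem ppAvoids_iff_valid (hπ : π.Bijective) :
    PPAvoids π (![0, 2, 3, 1] : Fin 4 → Fin 4) ↔
      Valid (lettersLeft (List.ofFn π)) (lettersRight (List.ofFn π)) := by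
  obtain ⟨L, R, hLR, -⟩ := exists_eq_holeWord_of_perm (ofFn_perm_finRange_iff.2 hπ)
  rw [ppAvoids_iff_forall_not_holeOccurrence hπ (by decide), hLR, lettersLeft_holeWord,
    lettersRight_holeWord, valid_iff_forall_not_sublist]
  simp only [holeOccurrence_iff_ofFn_sublist, hLR, ofFn_insertNth_none,
    holeWord_sublist_holeWord_iff, not_exists, not_and]

theorem snk_1342_eq_iterate_childSum (N : ℕ) :
    snk (N + 1) 1 (![0, 2, 3, 1] : Fin 4 → Fin 4) = childSum^[N] 1 (.low 1) := by
  have hsorted : (List.finRange N).reverse.Pairwise (· > ·) :=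
    List.pairwise_reverse.2 (List.pairwise_lt_finRange N)
  have hcard := card_valid_words hsorted
  rw [List.length_reverse, List.length_finRange] at hcard
  rw [snk, ← hcard]
  refine Nat.card_eq_of_bijective
    (Subtype.map List.ofFn fun π ⟨hπ, havoid⟩ => ?_) ⟨?_, fun ⟨w, hw, hvalid⟩ => ?_⟩
  · have hbij := isPPerm_one_iff.1 hπ
    exact ⟨ofFn_perm_finRange_iff.2 hbij, (ppAvoids_iff_valid hbij).1 havoid⟩
  · exact Subtype.map_injective _ List.ofFn_injective
  · obtain ⟨m, π, rfl⟩ : ∃ (m : ℕ) (π : Fin m → Option (Fin N)), List.ofFn π = w :=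
      ⟨w.length, w.get, List.ofFn_get w⟩
    obtain rfl : m = N + 1 := by simpa using hw.length_eq
    have hbij := ofFn_perm_finRange_iff.1 hw
    exact ⟨⟨π, isPPerm_one_iff.2 hbij, (ppAvoids_iff_valid hbij).2 hvalid⟩, rfl⟩

end Translation

end PartialPerm

/-- `s_n^1(1342) = C(2n-2, n-1) - C(2n-2, n-5)` for `n ≥ 1` (the second
binomial coefficient being `0` when `n - 5` is negative). -/
theorem count_1342_one_hole (n : ℕ) (hn : 1 ≤ n) :
    snk n 1 (![0, 2, 3, 1] : Fin 4 → Fin 4) =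
      (2 * n - 2).choose (n - 1) -
        (if 5 ≤ n then (2 * n - 2).choose (n - 5) else 0) := by
  obtain ⟨N, rfl⟩ := Nat.exists_eq_add_of_le' hn
  have htwo : 2 * (N + 1) - 2 = 2 * N := by lia
  have hfive : N + 1 - 5 = N - 4 := by lia
  have hle : 5 ≤ N + 1 ↔ 4 ≤ N := by lia
  rw [PartialPerm.snk_1342_eq_iterate_childSum, htwo, hfive, Nat.add_sub_cancel]
  simp only [hle]
  exact Nat.eq_sub_of_add_eq (PartialPerm.iterate_childSum_low_one_eq_choose N)
end

section
/- For n ≥ 1, the number of partial permutations of length n with one hole avoiding the pattern 2413 equals 2·binomial(2n,n)/(n+1) − 2^{n−1}, i.e., twice the n-th Catalan number minus 2^{n−1}. -/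
open Finset

/-!
Write a partial permutation as `L ◇ R` with hole `◇`, and let `A`, `B` be the value sets of `L`
and `R`, which split `{1, …, m}` where `m = n - 1`. Since the hole may be filled by a number of any
size, a `2413` using the hole is an occurrence of the three remaining letters in the right order,
and the four possible roles of the hole give four conditions: `L` avoids `231`, `R` avoids `312`,
no ascent of `L` straddles an element of `B`, and no ascent of `R` straddles an element of `A`.

Cut `A` into runs, the maximal parts not separated by elements of `B`. If the largest element of
`A` is not in the lowest run, the conditions force it to be the first letter of `L`. Hence the
elements above the lowest run come first, in decreasing order, and the lowest run is an arbitrary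
`231`-avoiding word. Dually, `R` is determined by a `312`-avoiding arrangement of the highest run
of `B`. The count is therefore the sum of `C_|lowest run of A| C_|highest run of B|` over all
splittings. The splittings with `B` below `A` contribute `C_(m+1)` by the Catalan recurrence.
For the others, removing the least value repeatedly turns the sum into `∑ C_(i+1) W_j` over
`i + j = m - 1`, where `W_0 = 0` and `W_(j+1) = 2 W_j + C_(j+1)`, and the recurrence evaluates it
to `C_(m+1) - 2^m`.
-/

section SplitSum

variable {α : Type*} [DecidableEq α]

/-- The sum of `f A B` over all ways of splitting the finite set `S` into two disjoint parts `A`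
and `B`. -/
def splitSum (S : Finset α) (f : Finset α → Finset α → ℕ) : ℕ :=
  ∑ A ∈ S.powerset, f A (S \ A)

@[simp]
theorem splitSum_empty (f : Finset α → Finset α → ℕ) : splitSum ∅ f = f ∅ ∅ := by
  simp [splitSum]

theorem splitSum_insert {x : α} {S : Finset α} (hx : x ∉ S) (f : Finset α → Finset α → ℕ) :
    splitSum (insert x S) f =
      splitSum S (fun A B => f A (insert x B)) + splitSum S (fun A B => f (insert x A) B) := by
  rw [splitSum, sum_powerset_insert hx]
  congr 1 <;> refine sum_congr rfl fun A hA => ?_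
  · rw [insert_sdiff_of_notMem _ (notMem_mono (mem_powerset.1 hA) hx)]
  · rw [insert_sdiff_insert, sdiff_insert_of_notMem hx]

theorem splitSum_congr {S : Finset α} {f g : Finset α → Finset α → ℕ}
    (h : ∀ A ⊆ S, ∀ B ⊆ S, f A B = g A B) : splitSum S f = splitSum S g :=
  sum_congr rfl fun _ hA => h _ (mem_powerset.1 hA) _ sdiff_subset

theorem splitSum_add (S : Finset α) (f g : Finset α → Finset α → ℕ) :
    splitSum S (fun A B => f A B + g A B) = splitSum S f + splitSum S g :=
  sum_add_distrib

theorem splitSum_mul_left (S : Finset α) (c : ℕ) (f : Finset α → Finset α → ℕ) :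
    splitSum S (fun A B => c * f A B) = c * splitSum S f :=
  (mul_sum _ _ _).symm

theorem splitSum_ite_add_splitSum_ite_not (S : Finset α) (p : Finset α → Finset α → Prop)
    [∀ A B, Decidable (p A B)] (f : Finset α → Finset α → ℕ) :
    splitSum S (fun A B => if p A B then f A B else 0) +
      splitSum S (fun A B => if p A B then 0 else f A B) = splitSum S f := by
  rw [← splitSum_add]
  exact splitSum_congr fun A _ B _ => by split_ifs <;> simp

theorem splitSum_ite_eq_empty (S : Finset α) (f : Finset α → Finset α → ℕ) :
    splitSum S (fun A B => if B = ∅ then f A B else 0) = f S ∅ := by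
  rw [splitSum, sum_eq_single_of_mem S (mem_powerset_self S)]
  · simp
  · intro A hA hne
    rw [if_neg]
    rw [sdiff_eq_empty_iff_subset]
    exact fun h => hne ((mem_powerset.1 hA).antisymm h)

theorem splitSum_comm (S : Finset α) (f : Finset α → Finset α → ℕ) :
    splitSum S (fun A B => f B A) = splitSum S f := by
  refine sum_nbij' (S \ ·) (S \ ·) ?_ ?_ ?_ ?_ ?_ <;> intro A hA
  · exact mem_powerset.2 sdiff_subset
  · exact mem_powerset.2 sdiff_subset
  all_goals simp only [_root_.sdiff_sdiff_eq_self (mem_powerset.1 hA)]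

end SplitSum

section Runs

variable {α : Type*} [LinearOrder α] {A B S : Finset α} {x : α}

/-- `Precedes B A` says that no element of `B` exceeds an element of `A`. -/
def Precedes (B A : Finset α) : Prop :=
  ∀ b ∈ B, ∀ a ∈ A, b ≤ a

instance (B A : Finset α) : Decidable (Precedes B A) :=
  inferInstanceAs (Decidable (∀ b ∈ B, ∀ a ∈ A, b ≤ a))

/-- The lowest run of `A` relative to `B`: the elements of `A` not separated from a smaller element
of `A` by an element of `B`. -/
def lowRun (A B : Finset α) : Finset α :=
  {a ∈ A | ∀ a' ∈ A, ∀ b ∈ B, ¬ (a' < b ∧ b < a)}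

/-- The highest run of `B` relative to `A`: the elements of `B` not separated from a larger element
of `B` by an element of `A`. -/
def topRun (A B : Finset α) : Finset α :=
  {b ∈ B | ∀ b' ∈ B, ∀ a ∈ A, ¬ (b < a ∧ a < b')}

/-- The elements of `A` below all of `B`. -/
def initialRun (A B : Finset α) : Finset α :=
  {a ∈ A | ∀ b ∈ B, a ≤ b}

theorem mem_lowRun {a : α} :
    a ∈ lowRun A B ↔ a ∈ A ∧ ∀ a' ∈ A, ∀ b ∈ B, ¬ (a' < b ∧ b < a) :=
  mem_filter

theorem mem_topRun {b : α} :
    b ∈ topRun A B ↔ b ∈ B ∧ ∀ b' ∈ B, ∀ a ∈ A, ¬ (b < a ∧ a < b') :=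
  mem_filter

theorem mem_initialRun {a : α} : a ∈ initialRun A B ↔ a ∈ A ∧ ∀ b ∈ B, a ≤ b :=
  mem_filter

theorem lowRun_eq_left_of_precedes (h : Precedes B A) : lowRun A B = A :=
  filter_true_of_mem fun _ _ a ha b hb hab => (h b hb a ha).not_gt hab.1

theorem topRun_eq_right_of_precedes (h : Precedes B A) : topRun A B = B :=
  filter_true_of_mem fun _ _ b hb a ha hab => (h b hb a ha).not_gt hab.2

theorem precedes_insert_left (hx : ∀ a ∈ A, x < a) :
    Precedes (insert x B) A ↔ Precedes B A := by
  simpa [Precedes, forall_mem_insert] using fun _ a ha => (hx a ha).le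

theorem precedes_insert_right (hx : ∀ b ∈ B, x < b) : Precedes B (insert x A) ↔ B = ∅ := by
  constructor
  · intro h
    exact eq_empty_of_forall_notMem fun b hb => (h b hb x (mem_insert_self x A)).not_gt (hx b hb)
  · rintro rfl
    simp [Precedes]

theorem lowRun_insert_right (hx : ∀ a ∈ A, x < a) : lowRun A (insert x B) = lowRun A B := by
  ext a
  simp only [mem_lowRun, forall_mem_insert]
  grind

theorem lowRun_insert_left (hA : ∀ a ∈ A, x < a) (hB : ∀ b ∈ B, x < b) :
    lowRun (insert x A) B = insert x (initialRun A B) := by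
  ext a
  simp only [mem_lowRun, mem_insert, mem_initialRun]
  grind

theorem initialRun_insert_right (hx : ∀ a ∈ A, x < a) : initialRun A (insert x B) = ∅ := by
  refine filter_eq_empty_iff.2 fun a ha h => ?_
  exact (h x (mem_insert_self x B)).not_gt (hx a ha)

theorem initialRun_insert_left (hx : ∀ b ∈ B, x < b) :
    initialRun (insert x A) B = insert x (initialRun A B) := by
  ext a
  simp only [mem_initialRun, mem_insert]
  grind

theorem card_insert_initialRun (hx : ∀ a ∈ A, x < a) :
    #(insert x (initialRun A B)) = #(initialRun A B) + 1 :=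
  card_insert_of_notMem fun h => (hx x (mem_initialRun.1 h).1).false

theorem topRun_insert_left (hx : ∀ b ∈ B, x < b) : topRun (insert x A) B = topRun A B := by
  ext b
  simp only [mem_topRun, forall_mem_insert]
  grind

theorem topRun_insert_right_of_not_precedes (hA : ∀ a ∈ A, x < a) (h : ¬ Precedes B A) :
    topRun A (insert x B) = topRun A B := by
  ext b
  simp only [Precedes, not_forall, mem_topRun, mem_insert] at h ⊢
  grind

end Runs

section Enumeration

theorem sum_antidiagonal_catalan_succ_mul_catalan_succ (n : ℕ) :
    ∑ p ∈ antidiagonal n, catalan (p.1 + 1) * catalan (p.2 + 1) + 2 * catalan (n + 2) =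
      catalan (n + 3) := by
  rw [catalan_succ' (n + 2), Nat.sum_antidiagonal_succ, Nat.sum_antidiagonal_succ']
  simp only [catalan_zero]
  ring

/-- The total weight of the splittings of an `n`-element set into `A` and a nonempty `B`, where
a splitting has weight `catalan #(topRun A B)`; see `splitSum_catalan_topRun`. -/
def topRunWeight : ℕ → ℕ
  | 0 => 0
  | n + 1 => 2 * topRunWeight n + catalan (n + 1)

theorem sum_antidiagonal_catalan_mul_topRunWeight (n : ℕ) :
    ∑ p ∈ antidiagonal n, catalan (p.1 + 1) * topRunWeight p.2 + 2 ^ (n + 1) =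
      catalan (n + 2) := by
  induction n with
  | zero => simp [topRunWeight, catalan_two]
  | succ n ih =>
    rw [Nat.sum_antidiagonal_succ', ← sum_antidiagonal_catalan_succ_mul_catalan_succ n, ← ih]
    have expand (p : ℕ × ℕ) : catalan (p.1 + 1) * topRunWeight (p.2 + 1) =
        2 * (catalan (p.1 + 1) * topRunWeight p.2) + catalan (p.1 + 1) * catalan (p.2 + 1) := by
      rw [topRunWeight]; ring
    have expand_sum := sum_congr rfl fun p (_ : p ∈ antidiagonal n) => expand p
    rw [sum_add_distrib, ← mul_sum] at expand_sum
    rw [expand_sum, topRunWeight]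
    ring

variable {α : Type*} [LinearOrder α] {S : Finset α} {x : α}

theorem splitSum_precedes (S : Finset α) (φ : ℕ → ℕ → ℕ) :
    splitSum S (fun A B => if Precedes B A then φ #A #B else 0) =
      ∑ p ∈ antidiagonal #S, φ p.1 p.2 := by
  induction S using Finset.induction_on_min generalizing φ with
  | empty => simp [Precedes]
  | insert x S hx ih =>
    have hxS : x ∉ S := fun h => (hx x h).false
    rw [splitSum_insert hxS, card_insert_of_notMem hxS, Nat.sum_antidiagonal_succ',
      add_comm (φ _ _)]
    congr 1
    · rw [← ih fun a b => φ a (b + 1)]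
      refine splitSum_congr fun A hA B hB => ?_
      rw [card_insert_of_notMem (notMem_mono hB hxS)]
      simp only [precedes_insert_left (B := B) fun a ha => hx a (hA ha)]
    · trans splitSum S (fun A B => if B = ∅ then φ #(insert x A) #B else 0)
      · refine splitSum_congr fun A _ B hB => ?_
        simp only [precedes_insert_right (A := A) fun b hb => hx b (hB hb)]
      · rw [splitSum_ite_eq_empty, card_insert_of_notMem hxS, card_empty]

theorem splitSum_precedes_catalan (S : Finset α) :
    splitSum S (fun A B => if Precedes B A then catalan #A * catalan #B else 0) =
      catalan (#S + 1) :=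
  (splitSum_precedes S fun a b => catalan a * catalan b).trans (catalan_succ' _).symm

theorem splitSum_catalan_topRun_insert (hx : ∀ y ∈ S, x < y) :
    splitSum S (fun A B => catalan #(topRun A (insert x B))) =
      splitSum S (fun A B => if B = ∅ then 0 else catalan #(topRun A B)) + catalan (#S + 1) := by
  have with_x : splitSum S (fun A B => catalan #(topRun A (insert x B))) =
      ∑ p ∈ antidiagonal #S, catalan (p.2 + 1) +
        splitSum S (fun A B => if Precedes B A then 0 else catalan #(topRun A B)) := by
    rw [← splitSum_precedes S fun _ b => catalan (b + 1), ← splitSum_add]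
    refine splitSum_congr fun A hA B hB => ?_
    have hxA : ∀ a ∈ A, x < a := fun a ha => hx a (hA ha)
    split_ifs with h
    · rw [topRun_eq_right_of_precedes ((precedes_insert_left hxA).2 h),
        card_insert_of_notMem fun hxB => (hx x (hB hxB)).false, add_zero]
    · rw [topRun_insert_right_of_not_precedes hxA h, zero_add]
  have without_x : splitSum S (fun A B => catalan #(topRun A B)) =
      ∑ p ∈ antidiagonal #S, catalan p.2 +
        splitSum S (fun A B => if Precedes B A then 0 else catalan #(topRun A B)) := by
    rw [← splitSum_precedes S fun _ b => catalan b,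
      ← splitSum_ite_add_splitSum_ite_not S fun A B => Precedes B A]
    congr 1
    refine splitSum_congr fun A _ B _ => ?_
    split_ifs with h
    · rw [topRun_eq_right_of_precedes h]
    · rfl
  have empty_part := splitSum_ite_eq_empty S fun A B => catalan #(topRun A B)
  have split_empty := splitSum_ite_add_splitSum_ite_not S (fun _ B => B = ∅)
    fun A B => catalan #(topRun A B)
  have telescope : ∑ p ∈ antidiagonal #S, catalan (p.2 + 1) + catalan 0 =
      ∑ p ∈ antidiagonal #S, catalan p.2 + catalan (#S + 1) := by
    rw [add_comm, ← Nat.sum_antidiagonal_succ' (f := fun p => catalan p.2),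
      Nat.sum_antidiagonal_succ, add_comm]
  simp only [topRun_eq_right_of_precedes (B := ∅) (A := S) (by simp [Precedes]),
    card_empty, catalan_zero] at empty_part telescope
  omega

theorem splitSum_catalan_topRun (S : Finset α) :
    splitSum S (fun A B => if B = ∅ then 0 else catalan #(topRun A B)) = topRunWeight #S := by
  induction S using Finset.induction_on_min with
  | empty => simp [topRunWeight]
  | insert x S hx ih =>
    have hxS : x ∉ S := fun h => (hx x h).false
    simp only [splitSum_insert hxS, card_insert_of_notMem hxS, insert_ne_empty, if_false,
      splitSum_catalan_topRun_insert hx, topRunWeight, ih]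
    rw [splitSum_congr (g := fun A B => if B = ∅ then 0 else catalan #(topRun A B))
      fun A _ B hB => by rw [topRun_insert_left fun b hb => hx b (hB hb)], ih]
    ring

theorem splitSum_initialRun_topRun_insert (hx : ∀ y ∈ S, x < y) (f : ℕ → ℕ) :
    splitSum (insert x S)
        (fun A B => if B = ∅ then 0 else f #(initialRun A B) * catalan #(topRun A B)) =
      f 0 * (topRunWeight #S + catalan (#S + 1)) + splitSum S
        (fun A B => if B = ∅ then 0 else f (#(initialRun A B) + 1) * catalan #(topRun A B)) := by
  rw [splitSum_insert fun h => (hx x h).false, ← splitSum_catalan_topRun,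
    ← splitSum_catalan_topRun_insert hx, ← splitSum_mul_left]
  congr 1 <;> refine splitSum_congr fun A hA B hB => ?_
  · rw [if_neg (insert_ne_empty x B), initialRun_insert_right fun a ha => hx a (hA ha),
      card_empty]
  · have hxB : ∀ b ∈ B, x < b := fun b hb => hx b (hB hb)
    rw [initialRun_insert_left hxB, card_insert_initialRun fun a ha => hx a (hA ha),
      topRun_insert_left hxB]

theorem splitSum_initialRun_topRun (hx : ∀ y ∈ S, x < y) (f : ℕ → ℕ) :
    splitSum (insert x S)
        (fun A B => if B = ∅ then 0 else f #(initialRun A B) * catalan #(topRun A B)) =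
      ∑ p ∈ antidiagonal #S, f p.1 * (topRunWeight p.2 + catalan (p.2 + 1)) := by
  rw [splitSum_initialRun_topRun_insert hx]
  induction S using Finset.induction_on_min generalizing f x with
  | empty => simp
  | insert y S hy ih =>
    rw [splitSum_initialRun_topRun_insert hy fun k => f (k + 1),
      ih hy fun k => f (k + 1),
      card_insert_of_notMem fun h => (hy y h).false, Nat.sum_antidiagonal_succ]

theorem splitSum_lowRun_topRun_insert (hx : ∀ y ∈ S, x < y) (f : ℕ → ℕ) :
    splitSum (insert x S)
        (fun A B => if Precedes B A then 0 else f #(lowRun A B) * catalan #(topRun A B)) =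
      splitSum S
        (fun A B => if Precedes B A then 0 else f #(lowRun A B) * catalan #(topRun A B)) +
      splitSum S
        (fun A B => if B = ∅ then 0 else f (#(initialRun A B) + 1) * catalan #(topRun A B)) := by
  rw [splitSum_insert fun h => (hx x h).false]
  congr 1 <;> refine splitSum_congr fun A hA B hB => ?_
  · have hxA : ∀ a ∈ A, x < a := fun a ha => hx a (hA ha)
    simp only [precedes_insert_left hxA, lowRun_insert_right hxA]
    split_ifs with h
    · rfl
    · rw [topRun_insert_right_of_not_precedes hxA h]
  · have hxA : ∀ a ∈ A, x < a := fun a ha => hx a (hA ha)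
    have hxB : ∀ b ∈ B, x < b := fun b hb => hx b (hB hb)
    simp only [precedes_insert_right hxB, lowRun_insert_left hxA hxB,
      card_insert_initialRun hxA, topRun_insert_left hxB]

theorem splitSum_lowRun_topRun (hx : ∀ y ∈ S, x < y) (f : ℕ → ℕ) :
    splitSum (insert x S)
        (fun A B => if Precedes B A then 0 else f #(lowRun A B) * catalan #(topRun A B)) =
      ∑ p ∈ antidiagonal #S, f (p.1 + 1) * topRunWeight p.2 := by
  rw [splitSum_lowRun_topRun_insert hx]
  induction S using Finset.induction_on_min generalizing x with
  | empty => simp [Precedes, topRunWeight]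
  | insert y S hy ih =>
    rw [splitSum_lowRun_topRun_insert hy, ih hy,
      splitSum_initialRun_topRun hy fun k => f (k + 1), ← sum_add_distrib,
      card_insert_of_notMem fun h => (hy y h).false, Nat.sum_antidiagonal_succ', topRunWeight,
      mul_zero, zero_add]
    refine sum_congr rfl fun p _ => ?_
    rw [topRunWeight]
    ring

theorem splitSum_catalan_lowRun_mul_catalan_topRun (S : Finset α) :
    splitSum S (fun A B => catalan #(lowRun A B) * catalan #(topRun A B)) + 2 ^ #S =
      2 * catalan (#S + 1) := by
  have precedes_part : splitSum S (fun A B =>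
      if Precedes B A then catalan #(lowRun A B) * catalan #(topRun A B) else 0) =
        catalan (#S + 1) := by
    rw [← splitSum_precedes_catalan]
    refine splitSum_congr fun A _ B _ => ite_congr rfl (fun h => ?_) fun _ => rfl
    rw [lowRun_eq_left_of_precedes h, topRun_eq_right_of_precedes h]
  have not_precedes_part : splitSum S (fun A B =>
      if Precedes B A then 0 else catalan #(lowRun A B) * catalan #(topRun A B)) + 2 ^ #S =
        catalan (#S + 1) := by
    induction S using Finset.induction_on_min with
    | empty => simp [Precedes]
    | insert x S hx _ =>
      rw [splitSum_lowRun_topRun hx, card_insert_of_notMem fun h => (hx x h).false,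
        sum_antidiagonal_catalan_mul_topRunWeight]
  rw [← splitSum_ite_add_splitSum_ite_not S fun A B => Precedes B A, precedes_part, add_assoc,
    not_precedes_part, two_mul]

end Enumeration

section Arrangements

variable {α : Type*}

/-- The words using each element of `A` exactly once and no other letters. -/
def arrangements (A : Finset α) : Finset (List α) :=
  ⟨A.val.lists, Multiset.lists_nodup_finset A⟩

theorem mem_arrangements {A : Finset α} {L : List α} :
    L ∈ arrangements A ↔ L.Nodup ∧ ∀ x, x ∈ L ↔ x ∈ A := by
  rw [arrangements, mem_mk, Multiset.mem_lists_iff, Multiset.quot_mk_to_coe]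
  refine ⟨fun h => ?_, fun ⟨hL, h⟩ => ?_⟩
  · refine ⟨Multiset.coe_nodup.1 (h ▸ A.nodup), fun x => ?_⟩
    rw [← Multiset.mem_coe, ← h, mem_val]
  · rw [Multiset.Nodup.ext A.nodup (Multiset.coe_nodup.2 hL)]
    exact fun x => (h x).symm

theorem arrangements_empty : arrangements (∅ : Finset α) = {[]} := by
  ext L
  simpa [mem_arrangements, ← List.eq_nil_iff_forall_not_mem] using fun h => h ▸ List.nodup_nil

theorem natCard_perm_ofFn_eq_card_filter_arrangements {n : ℕ} (P : List (Fin n) → Prop)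
    [DecidablePred P] :
    Nat.card {σ : Equiv.Perm (Fin n) // P (List.ofFn σ)} = #{W ∈ arrangements univ | P W} := by
  have mem_iff (W : List (Fin n)) : W ∈ arrangements univ ↔ W.Nodup ∧ ∀ x, x ∈ W := by
    simp [mem_arrangements]
  rw [Nat.card_eq_fintype_card, Fintype.card_subtype]
  refine card_nbij (fun σ => List.ofFn σ) (fun σ hσ => ?_) ?_ fun W hW => ?_
  · refine mem_filter.2 ⟨(mem_iff _).2 ⟨List.nodup_ofFn.2 σ.injective, fun x => ?_⟩,
      (mem_filter.1 hσ).2⟩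
    exact List.mem_ofFn.2 (σ.surjective x)
  · exact (List.ofFn_injective.comp DFunLike.coe_injective).injOn
  · obtain ⟨hW, hPW⟩ := mem_filter.1 hW
    obtain ⟨nodup, mem⟩ := (mem_iff W).1 hW
    let e : Fin W.length ≃ Fin n := nodup.getEquivOfForallMemList W mem
    have length_eq : n = W.length := (Fin.equiv_iff_eq.1 ⟨e⟩).symm
    have ofFn_eq : List.ofFn ((finCongr length_eq).trans e) = W :=
      List.ext_getElem (by simp [length_eq]) (by simp [e])
    refine ⟨(finCongr length_eq).trans e, mem_filter.2 ⟨mem_univ _, ?_⟩, ofFn_eq⟩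
    rwa [ofFn_eq]

variable [DecidableEq α]

theorem toFinset_of_mem_arrangements {A : Finset α} {L : List α}
    (hL : L ∈ arrangements A) : L.toFinset = A := by
  ext x
  rw [List.mem_toFinset, (mem_arrangements.1 hL).2]

theorem cons_mem_arrangements {x : α} {A : Finset α} (hx : x ∉ A) {L : List α} :
    x :: L ∈ arrangements (insert x A) ↔ L ∈ arrangements A := by
  simp only [mem_arrangements, List.nodup_cons, List.mem_cons, mem_insert]
  constructor
  · rintro ⟨⟨hxL, hL⟩, h⟩
    exact ⟨hL, by grind⟩
  · rintro ⟨hL, h⟩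
    exact ⟨⟨by grind, hL⟩, by grind⟩

theorem append_cons_mem_arrangements {x : α} {S : Finset α} (hx : x ∉ S) {L R : List α} :
    L ++ x :: R ∈ arrangements (insert x S) ↔
      ∃ A ⊆ S, L ∈ arrangements A ∧ R ∈ arrangements (S \ A) := by
  simp only [mem_arrangements, mem_sdiff, mem_insert, List.mem_append, List.mem_cons]
  rw [List.nodup_middle, List.nodup_cons, List.nodup_append', List.mem_append]
  constructor
  · rintro ⟨⟨hxLR, hL, hR, hLR⟩, h⟩
    refine ⟨L.toFinset, fun y hy => ?_, ⟨hL, fun y => List.mem_toFinset.symm⟩, hR, fun y => ?_⟩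
    · grind [List.mem_toFinset]
    · grind [List.mem_toFinset, List.Disjoint]
  · rintro ⟨A, hA, ⟨hL, hLA⟩, hR, hRA⟩
    exact ⟨⟨by grind, hL, hR, fun y => by grind⟩, by grind⟩

theorem card_filter_arrangements_insert {x : α} {S : Finset α} (hx : x ∉ S)
    (P : List α → Prop) [DecidablePred P] :
    #{L ∈ arrangements (insert x S) | P L} = splitSum S fun A B =>
      #{w ∈ arrangements A ×ˢ arrangements B | P (w.1 ++ x :: w.2)} := by
  rw [splitSum, ← card_sigma]
  symm
  refine card_nbij (fun w => w.2.1 ++ x :: w.2.2) ?_ ?_ ?_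
  · rintro ⟨A, L, R⟩ hw
    simp only [mem_coe, mem_sigma, mem_powerset, mem_filter, mem_product] at hw
    exact mem_filter.2 ⟨(append_cons_mem_arrangements hx).2 ⟨A, hw.1, hw.2.1⟩, hw.2.2⟩
  · rintro ⟨A, L, R⟩ hw ⟨A', L', R'⟩ hw' h
    simp only [mem_coe, mem_sigma, mem_powerset, mem_filter, mem_product, mem_arrangements,
      mem_sdiff] at hw hw'
    obtain ⟨rfl, -, rfl⟩ := (List.append_cons_inj_of_notMem (by grind) (by grind)).1 h
    obtain rfl : A = A' := ext fun y => (hw.2.1.1.2 y).symm.trans (hw'.2.1.1.2 y)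
    rfl
  · intro W hW
    obtain ⟨hW, hPW⟩ := mem_filter.1 hW
    obtain ⟨L, R, rfl⟩ := List.append_of_mem
      (((mem_arrangements.1 hW).2 x).2 (mem_insert_self x S))
    obtain ⟨A, hA, hL, hR⟩ := (append_cons_mem_arrangements hx).1 hW
    refine ⟨⟨A, L, R⟩, ?_, rfl⟩
    simp only [mem_coe, mem_sigma, mem_powerset, mem_filter, mem_product]
    exact ⟨hA, ⟨hL, hR⟩, hPW⟩

end Arrangements

section LeftWords

open OrderDual

variable {α : Type*} [LinearOrder α] {A B S : Finset α} {L L₁ L₂ : List α} {x : α}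

/-- The word `L` avoids the pattern `231`. -/
def Avoids231 (L : List α) : Prop :=
  L.Triplewise fun a b c => ¬ (c < a ∧ a < b)

/-- No ascent of the word `L`, between adjacent letters or not, straddles an element of `B`. -/
def NoStraddle (B : Finset α) (L : List α) : Prop :=
  L.Pairwise fun a b => ∀ d ∈ B, ¬ (a < d ∧ d < b)

theorem avoids231_cons (hL : ∀ a ∈ L, a < x) : Avoids231 (x :: L) ↔ Avoids231 L := by
  rw [Avoids231, List.triplewise_cons, and_iff_right]
  · rfl
  · exact List.pairwise_of_forall_mem_list fun b hb _ _ h => (hL b hb).not_gt h.2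

theorem noStraddle_cons (hL : ∀ a ∈ L, a < x) : NoStraddle B (x :: L) ↔ NoStraddle B L := by
  rw [NoStraddle, List.pairwise_cons, and_iff_right]
  · rfl
  · exact fun b hb d _ h => (hL b hb).not_gt (h.1.trans h.2)

theorem avoids231_append_cons (h₁ : ∀ a ∈ L₁, a < x) (h₂ : ∀ a ∈ L₂, a < x) :
    Avoids231 (L₁ ++ x :: L₂) ↔ (∀ a ∈ L₁, ∀ c ∈ L₂, a ≤ c) ∧ Avoids231 L₁ ∧ Avoids231 L₂ := by
  constructor
  · intro h
    obtain ⟨h_left, h_right, hp, -⟩ := List.triplewise_append.1 h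
    refine ⟨fun a ha c hc => ?_, h_left, (avoids231_cons h₂).1 h_right⟩
    exact not_lt.1 fun hca => (List.pairwise_cons.1 (hp a ha)).1 c hc ⟨hca, h₁ a ha⟩
  · rintro ⟨h, h_left, h_right⟩
    refine List.triplewise_append.2 ⟨h_left, (avoids231_cons h₂).2 h_right, fun a ha => ?_, ?_⟩
    · refine List.pairwise_cons.2 ⟨fun c hc hca => (h a ha c hc).not_gt hca.1, ?_⟩
      exact List.pairwise_of_forall_mem_list fun _ _ c hc hca => (h a ha c hc).not_gt hca.1
    · refine fun c hc => List.pairwise_of_forall_mem_list fun a ha b _ hcab => ?_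
      rcases List.mem_cons.1 hc with rfl | hc
      · exact (h₁ a ha).not_gt hcab.1
      · exact (h a ha c hc).not_gt hcab.1

open Classical in
theorem card_filter_avoids231_arrangements (S : Finset α) :
    #{L ∈ arrangements S | Avoids231 L} = catalan #S := by
  induction S using Finset.strongInduction with
  | H S ih =>
    rcases S.eq_empty_or_nonempty with rfl | hS
    · simp [arrangements_empty, Avoids231, filter_singleton]
    obtain ⟨M, T, hMT, rfl⟩ : ∃ M T, (∀ a ∈ T, a < M) ∧ S = insert M T :=
      ⟨S.max' hS, S.erase (S.max' hS), fun a ha => S.lt_max'_of_mem_erase_max' hS ha,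
        (insert_erase (S.max'_mem hS)).symm⟩
    have hM : M ∉ T := fun h => (hMT M h).false
    rw [card_insert_of_notMem hM, ← splitSum_precedes_catalan, ← splitSum_comm,
      card_filter_arrangements_insert hM]
    refine splitSum_congr fun A hA B hB => ?_
    rw [← ih A (hA.trans_ssubset (ssubset_insert hM)),
      ← ih B (hB.trans_ssubset (ssubset_insert hM)), mul_comm, ← card_product]
    have avoids_iff {w : List α × List α} (hw : w ∈ arrangements A ×ˢ arrangements B) :
        Avoids231 (w.1 ++ M :: w.2) ↔ Precedes A B ∧ Avoids231 w.1 ∧ Avoids231 w.2 := by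
      simp only [mem_product, mem_arrangements] at hw
      rw [avoids231_append_cons (fun a ha => hMT a (hA ((hw.1.2 a).1 ha)))
        fun a ha => hMT a (hB ((hw.2.2 a).1 ha))]
      simp only [hw.1.2, hw.2.2, Precedes]
    rw [filter_congr fun w hw => avoids_iff hw]
    split_ifs with h
    · simp only [h, true_and, filter_product]
    · simp [h]

/-- The left parts, with value set `A`, of the partial permutations avoiding `2413` whose right
part has value set `B`. -/
noncomputable def leftWords (A B : Finset α) : Finset (List α) :=
  open Classical in {L ∈ arrangements A | NoStraddle B L ∧ Avoids231 L}

theorem mem_leftWords : L ∈ leftWords A B ↔ L ∈ arrangements A ∧ NoStraddle B L ∧ Avoids231 L := by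
  simp [leftWords]

theorem card_leftWords_of_lowRun_eq (h : lowRun A B = A) : #(leftWords A B) = catalan #A := by
  classical
  rw [← card_filter_avoids231_arrangements A, leftWords]
  congr 1
  refine filter_congr fun L hL => and_iff_right ?_
  refine List.pairwise_of_forall_mem_list fun a ha b hb d hd => ?_
  have mem_A (y : α) (hy : y ∈ L) : y ∈ A := ((mem_arrangements.1 hL).2 y).1 hy
  exact (mem_lowRun.1 (h.symm ▸ mem_A b hb)).2 a (mem_A a ha) d hd

theorem lowRun_insert_of_mem (hA : ∀ a ∈ A, a < x) (hx : x ∈ lowRun (insert x A) B) :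
    lowRun (insert x A) B = insert x A := by
  refine filter_true_of_mem fun y hy a ha b hb hab => (mem_lowRun.1 hx).2 a ha b hb ⟨hab.1, ?_⟩
  rcases mem_insert.1 hy with rfl | hy
  · exact hab.2
  · exact hab.2.trans (hA y hy)

theorem lowRun_insert_of_notMem (hA : ∀ a ∈ A, a < x) (hx : x ∉ lowRun (insert x A) B) :
    lowRun (insert x A) B = lowRun A B := by
  rw [lowRun, filter_insert, if_neg fun h => hx (mem_filter.2 ⟨mem_insert_self x A, h⟩)]
  refine filter_congr fun y hy => forall_mem_insert _ _ _ |>.trans <| and_iff_right ?_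
  exact fun b _ h => (hA y hy).not_gt (h.1.trans h.2)

theorem cons_mem_leftWords (hA : ∀ a ∈ A, a < x) :
    x :: L ∈ leftWords (insert x A) B ↔ L ∈ leftWords A B := by
  rw [mem_leftWords, mem_leftWords, cons_mem_arrangements fun h => (hA x h).false]
  refine and_congr_right fun hL => ?_
  have hL (a : α) (ha : a ∈ L) : a < x := hA a (((mem_arrangements.1 hL).2 a).1 ha)
  rw [noStraddle_cons hL, avoids231_cons hL]

theorem exists_eq_cons_of_mem_leftWords (hA : ∀ a ∈ A, a < x) (hx : x ∉ lowRun (insert x A) B)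
    (hL : L ∈ leftWords (insert x A) B) : ∃ L', L = x :: L' := by
  obtain ⟨a, ha, b, hb, hab, hbx⟩ : ∃ a ∈ A, ∃ b ∈ B, a < b ∧ b < x := by
    by_contra! h
    refine hx (mem_lowRun.2 ⟨mem_insert_self x A, (forall_mem_insert _ _ _).2 ⟨?_, ?_⟩⟩)
    · exact fun b _ hb => hb.1.not_gt hb.2
    · exact fun a ha b hb hab => (h a ha b hb hab.1).not_gt hab.2
  obtain ⟨hL, straddle, avoids⟩ := mem_leftWords.1 hL
  have hxA : x ∉ A := fun h => (hA x h).false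
  obtain ⟨L₁, L₂, rfl⟩ := List.append_of_mem
    (((mem_arrangements.1 hL).2 x).2 (mem_insert_self x A))
  obtain ⟨A₁, hA₁, hL₁, hL₂⟩ := (append_cons_mem_arrangements hxA).1 hL
  rw [mem_arrangements] at hL₁ hL₂
  have le_of_mem := ((avoids231_append_cons (fun y hy => hA y (hA₁ ((hL₁.2 y).1 hy)))
    fun y hy => hA y (sdiff_subset ((hL₂.2 y).1 hy))).1 avoids).1
  have not_straddle (y : α) (hy : y ∈ L₁) : ¬ (y < b ∧ b < x) :=
    (List.pairwise_append.1 straddle).2.2 y hy x List.mem_cons_self b hb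
  match L₁ with
  | [] => exact ⟨L₂, rfl⟩
  | y :: _ =>
    by_cases ha₁ : a ∈ A₁
    · exact absurd ⟨hab, hbx⟩ (not_straddle a ((hL₁.2 a).2 ha₁))
    · have hya := le_of_mem y List.mem_cons_self a ((hL₂.2 a).2 (mem_sdiff.2 ⟨ha, ha₁⟩))
      exact absurd ⟨hya.trans_lt hab, hbx⟩ (not_straddle y List.mem_cons_self)

theorem card_leftWords (A B : Finset α) : #(leftWords A B) = catalan #(lowRun A B) := by
  induction A using Finset.induction_on_max with
  | empty => exact card_leftWords_of_lowRun_eq rfl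
  | insert x A hA ih =>
    by_cases hx : x ∈ lowRun (insert x A) B
    · have h := lowRun_insert_of_mem hA hx
      rw [card_leftWords_of_lowRun_eq h, h]
    · have image_cons : leftWords (insert x A) B = (leftWords A B).image (x :: ·) := by
        ext L
        rw [mem_image]
        constructor
        · intro hL
          obtain ⟨L, rfl⟩ := exists_eq_cons_of_mem_leftWords hA hx hL
          exact ⟨L, (cons_mem_leftWords hA).1 hL, rfl⟩
        · rintro ⟨L, hL, rfl⟩
          exact (cons_mem_leftWords hA).2 hL
      rw [image_cons, card_image_of_injective _ List.cons_injective, ih,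
        lowRun_insert_of_notMem hA hx]

/-- The word `R` avoids the pattern `312`. -/
def Avoids312 (R : List α) : Prop :=
  R.Triplewise fun a b c => ¬ (b < c ∧ c < a)

/-- The right parts, with value set `B`, of the partial permutations avoiding `2413` whose left
part has value set `A`. -/
noncomputable def rightWords (A B : Finset α) : Finset (List α) :=
  open Classical in {R ∈ arrangements B | NoStraddle A R ∧ Avoids312 R}

theorem mem_rightWords :
    L ∈ rightWords A B ↔ L ∈ arrangements B ∧ NoStraddle A L ∧ Avoids312 L := by
  simp [rightWords]

theorem lowRun_map_toDual (A B : Finset α) :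
    lowRun (B.map toDual.toEmbedding) (A.map toDual.toEmbedding) =
      (topRun A B).map toDual.toEmbedding := by
  ext b
  obtain ⟨b, rfl⟩ := toDual.surjective b
  rw [mem_lowRun, mem_map_equiv, mem_map_equiv, Equiv.symm_apply_apply, mem_topRun]
  simp only [forall_mem_map, Equiv.coe_toEmbedding, toDual_lt_toDual]
  exact and_congr_right fun _ => forall₄_congr fun _ _ _ _ => not_congr and_comm

theorem map_toDual_reverse_mem_leftWords :
    L.reverse.map toDual ∈ leftWords (B.map toDual.toEmbedding) (A.map toDual.toEmbedding) ↔
      L ∈ rightWords A B := by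
  simp only [mem_leftWords, mem_rightWords, NoStraddle, Avoids231, List.pairwise_map,
    List.triplewise_map, List.pairwise_reverse, List.triplewise_reverse]
  simp only [forall_mem_map, Equiv.coe_toEmbedding, toDual_lt_toDual]
  refine and_congr ?_ (and_congr ?_ ?_)
  · simp [mem_arrangements, List.nodup_map_iff toDual.injective]
  · exact List.Pairwise.iff fun _ _ => forall₂_congr fun _ _ => not_congr and_comm
  · exact ⟨List.Triplewise.imp fun h => mt And.symm h, List.Triplewise.imp fun h => mt And.symm h⟩

theorem card_rightWords (A B : Finset α) : #(rightWords A B) = catalan #(topRun A B) := by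
  rw [← card_map toDual.toEmbedding (s := topRun A B), ← lowRun_map_toDual, ← card_leftWords]
  refine card_nbij (fun L => L.reverse.map toDual)
    (fun L hL => map_toDual_reverse_mem_leftWords.2 hL) ?_ fun L hL => ?_
  · exact (toDual.injective.list_map.comp List.reverse_injective).injOn
  · refine ⟨(L.map ofDual).reverse, map_toDual_reverse_mem_leftWords.1 ?_, ?_⟩
    · simpa using hL
    · simp

theorem splitSum_card_leftWords_mul_card_rightWords (S : Finset α) :
    splitSum S (fun A B => #(leftWords A B) * #(rightWords A B)) + 2 ^ #S =
      2 * catalan (#S + 1) := by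
  simp only [card_leftWords, card_rightWords, splitSum_catalan_lowRun_mul_catalan_topRun]

end LeftWords

section Extensions

variable {m ℓ : ℕ} {σ τ : Equiv.Perm (Fin (m + 1))}

theorem isPPerm_one_iff_bijective {π : Fin (m + 1) → Option (Fin m)} :
    IsPPerm (n := m + 1) 1 π ↔ Function.Bijective π := by
  rw [Function.bijective_iff_existsUnique, Option.forall, Fintype.existsUnique_iff_card_one]
  rfl

/- A partial permutation with one hole is encoded as the permutation `σ` in which the value `0`
stands for the hole. -/
theorem snk_succ_one (m : ℕ) (p : Fin ℓ → Fin ℓ) :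
    snk (m + 1) 1 p =
      Nat.card {σ : Equiv.Perm (Fin (m + 1)) // PPAvoids (finSuccEquiv m ∘ σ) p} := by
  have hbij (σ : Equiv.Perm (Fin (m + 1))) : Function.Bijective (finSuccEquiv m ∘ σ) :=
    (finSuccEquiv m).bijective.comp σ.bijective
  refine (Nat.card_eq_of_bijective
    (Subtype.map (fun σ : Equiv.Perm (Fin (m + 1)) => finSuccEquiv m ∘ σ)
      fun σ hσ => ⟨isPPerm_one_iff_bijective.2 (hbij σ), hσ⟩) ⟨?_, ?_⟩).symm
  · refine Subtype.map_injective _ fun σ σ' h => Equiv.ext fun i => ?_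
    exact (finSuccEquiv m).injective (congrFun h i)
  · rintro ⟨π, hπ, avoids⟩
    obtain ⟨σ, rfl⟩ : ∃ σ : Equiv.Perm (Fin (m + 1)), finSuccEquiv m ∘ σ = π := by
      refine ⟨.trans (.ofBijective π (isPPerm_one_iff_bijective.1 hπ)) (finSuccEquiv m).symm, ?_⟩
      ext1 i
      simp
    exact ⟨⟨σ, avoids⟩, rfl⟩

theorem isExtension_finSuccEquiv_iff :
    IsExtension τ (finSuccEquiv m ∘ σ) ↔
      ∀ i j, σ i ≠ 0 → σ j ≠ 0 → (τ i < τ j ↔ σ i < σ j) := by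
  refine forall₂_congr fun i j => ?_
  simp only [Function.comp_apply, finSuccEquiv_eq_some]
  constructor
  · intro h hi hj
    obtain ⟨v, hv⟩ := Fin.exists_succ_eq.2 hi
    obtain ⟨w, hw⟩ := Fin.exists_succ_eq.2 hj
    rw [h v w hv.symm hw.symm, ← hv, ← hw, Fin.succ_lt_succ_iff]
  · intro h v w hv hw
    rw [h (hv ▸ v.succ_ne_zero) (hw ▸ w.succ_ne_zero), hv, hw, Fin.succ_lt_succ_iff]

/-- The extension of the partial permutation `finSuccEquiv m ∘ σ` whose value at the hole is
`t`. -/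
def fillHole (σ : Equiv.Perm (Fin (m + 1))) (t : Fin (m + 1)) : Equiv.Perm (Fin (m + 1)) :=
  σ.trans t.cycleRange.symm

theorem isExtension_fillHole (σ : Equiv.Perm (Fin (m + 1))) (t : Fin (m + 1)) :
    IsExtension (fillHole σ t) (finSuccEquiv m ∘ σ) := by
  intro i j v w hv hw
  simp only [Function.comp_apply, finSuccEquiv_eq_some] at hv hw
  simp [fillHole, hv, hw, Fin.cycleRange_symm_succ]

theorem fillHole_apply_of_eq_zero {t i : Fin (m + 1)} (hi : σ i = 0) : fillHole σ t i = t := by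
  simp [fillHole, hi]

theorem fillHole_apply_lt_iff {t i : Fin (m + 1)} (hi : σ i ≠ 0) :
    fillHole σ t i < t ↔ σ i ≤ t := by
  obtain ⟨v, hv⟩ := Fin.exists_succ_eq.2 hi
  rw [fillHole, Equiv.trans_apply, ← hv, Fin.cycleRange_symm_succ, Fin.succAbove_lt_iff_succ_le]

theorem exists_strictMono_update {α : Type*} [LinearOrder α] {g : Fin (ℓ + 1) → α}
    (hg : StrictMono g) (x : α) : ∃ i, StrictMono (Function.update g i x) := by
  obtain ⟨i, hlt, hgt⟩ : ∃ i, (∀ j < i, g j < x) ∧ ∀ j > i, x < g j := by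
    by_cases h : ∃ i, x ≤ g i
    · obtain ⟨i, hi⟩ := exists_minimal_of_wellFoundedLT _ h
      exact ⟨i, fun j hj => not_le.1 (hi.not_prop_of_lt hj), fun j hj => hi.prop.trans_lt (hg hj)⟩
    · push Not at h
      exact ⟨Fin.last ℓ, fun j _ => h j, fun j hj => absurd (Fin.le_last j) hj.not_ge⟩
  refine ⟨i, fun a b hab => ?_⟩
  rcases eq_or_ne a i with rfl | ha
  · rw [Function.update_self, Function.update_of_ne hab.ne']
    exact hgt b hab
  · rw [Function.update_of_ne ha]
    rcases eq_or_ne b i with rfl | hb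
    · rw [Function.update_self]
      exact hlt a hab
    · rw [Function.update_of_ne hb]
      exact hg hab

variable {β : Type*} [LinearOrder β] {p : Fin (ℓ + 1) → β}

theorem exists_isExtension_containsPat (hp : Function.Injective p)
    {g : Fin (ℓ + 1) → Fin (m + 1)} (hg : StrictMono g) {i : Fin (ℓ + 1)} (hi : σ (g i) = 0)
    (h : ∀ j k, σ (g (i.succAbove j)) < σ (g (i.succAbove k)) ↔
      p (i.succAbove j) < p (i.succAbove k)) :
    ∃ τ, IsExtension τ (finSuccEquiv m ∘ σ) ∧ ContainsPat τ p := by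
  have ne_zero (j : Fin ℓ) : σ (g (i.succAbove j)) ≠ 0 := fun hj =>
    i.succAbove_ne j (hg.injective (σ.injective (hj.trans hi.symm)))
  set t : Fin (m + 1) := sup {j | p (i.succAbove j) < p i} fun j => σ (g (i.succAbove j))
  refine ⟨fillHole σ t, isExtension_fillHole σ t, g, hg, ?_⟩
  set τ := fillHole σ t
  have at_hole : τ (g i) = t := fillHole_apply_of_eq_zero hi
  have lt_hole (j : Fin ℓ) :
      τ (g (i.succAbove j)) < τ (g i) ↔ p (i.succAbove j) < p i := by
    rw [at_hole, fillHole_apply_lt_iff (ne_zero j)]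
    refine ⟨fun hj => ?_, fun hj =>
      le_sup (f := fun j => σ (g (i.succAbove j))) (mem_filter.2 ⟨mem_univ j, hj⟩)⟩
    by_contra! hij
    refine hj.not_gt ((Finset.sup_lt_iff (Fin.pos_of_ne_zero (ne_zero j))).2 fun k hk => ?_)
    exact (h k j).2 ((mem_filter.1 hk).2.trans_le hij)
  have hole_lt (j : Fin ℓ) :
      τ (g i) < τ (g (i.succAbove j)) ↔ p i < p (i.succAbove j) := by
    have hij : i ≠ i.succAbove j := (i.succAbove_ne j).symm
    rw [← not_iff_not, not_lt, not_lt, (τ.injective.ne (hg.injective.ne hij.symm)).le_iff_lt,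
      (hp.ne hij.symm).le_iff_lt, lt_hole]
  intro j k
  cases j using Fin.succAboveCases i <;> cases k using Fin.succAboveCases i
  · simp
  · exact hole_lt _
  · exact lt_hole _
  · rw [← h]
    exact isExtension_finSuccEquiv_iff.1 (isExtension_fillHole σ t) _ _ (ne_zero _) (ne_zero _)

theorem ppAvoids_finSuccEquiv_iff (hp : Function.Injective p) :
    PPAvoids (finSuccEquiv m ∘ σ) p ↔
      ∀ g : Fin (ℓ + 1) → Fin (m + 1), StrictMono g → ∀ i, σ (g i) = 0 →
        ¬ ∀ j k, σ (g (i.succAbove j)) < σ (g (i.succAbove k)) ↔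
          p (i.succAbove j) < p (i.succAbove k) := by
  constructor
  · intro h g hg i hi hgp
    obtain ⟨τ, hτ, hτp⟩ := exists_isExtension_containsPat hp hg hi hgp
    exact h τ hτ hτp
  · rintro h τ hτ ⟨g, hg, hgp⟩
    -- Moving a suitable letter `i` of an occurrence to the hole leaves the other letters in order.
    obtain ⟨i, hi⟩ := exists_strictMono_update hg (σ.symm 0)
    refine h _ hi i (by simp) fun j k => ?_
    have ne_zero (j : Fin ℓ) : σ (g (i.succAbove j)) ≠ 0 := by
      rw [Ne, ← σ.eq_symm_apply]
      simpa using hi.injective.ne (i.succAbove_ne j)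
    simp only [Function.update_of_ne (i.succAbove_ne _)]
    rw [← isExtension_finSuccEquiv_iff.1 hτ _ _ (ne_zero j) (ne_zero k), hgp]

end Extensions

section HoleWords

variable {α : Type*}

theorem ofFn_sublist_ofFn_iff {k n : ℕ} {u : Fin k → α} {v : Fin n → α} :
    (List.ofFn u).Sublist (List.ofFn v) ↔
      ∃ g : Fin k → Fin n, StrictMono g ∧ ∀ i, u i = v (g i) := by
  rw [List.sublist_iff_exists_fin_orderEmbedding_get_eq]
  simp only [List.get_ofFn]
  have hu := List.length_ofFn (f := u)
  have hv := List.length_ofFn (f := v)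
  constructor
  · rintro ⟨f, hf⟩
    refine ⟨fun i => (f (i.cast hu.symm)).cast hv, fun i j hij => f.strictMono hij, fun i => ?_⟩
    exact hf (i.cast hu.symm)
  · rintro ⟨g, hg, h⟩
    exact ⟨.ofStrictMono (fun i => (g (i.cast hu)).cast hv.symm) fun i j hij => hg hij,
      fun i => h _⟩

theorem append_cons_sublist_append_cons_iff {a : α} {l₁ l₂ L R : List α}
    (hL : a ∉ L) (hR : a ∉ R) :
    (l₁ ++ a :: l₂).Sublist (L ++ a :: R) ↔ l₁.Sublist L ∧ l₂.Sublist R := by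
  refine ⟨fun h => ?_, fun h => h.1.append (h.2.cons_cons a)⟩
  obtain ⟨x, y, hxy, hx, hy⟩ := List.sublist_append_iff.1 h
  rcases List.append_eq_append_iff.1 hxy with ⟨_ | ⟨b, z⟩, rfl, hz⟩ | ⟨_ | ⟨b, z⟩, rfl, rfl⟩
  · subst hz
    exact ⟨by simpa using hx, List.cons_sublist_cons.1 hy⟩
  · obtain ⟨rfl, -⟩ := List.cons.inj hz
    exact absurd (hx.subset (by simp)) hL
  · exact ⟨by simpa using hx, List.cons_sublist_cons.1 hy⟩
  · exact absurd (hy.tail.subset (by simp)) hR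

theorem triplewise_iff_forall_sublist {L : List α} {P : α → α → α → Prop} :
    L.Triplewise P ↔ ∀ a b c, [a, b, c].Sublist L → P a b c := by
  induction L with
  | nil => simp
  | cons x L ih =>
    rw [List.triplewise_cons, ih, List.pairwise_iff_forall_sublist]
    simp only [List.sublist_cons_iff]
    grind

/-- No way of replacing the hole, written `0`, by a number of arbitrary size among the other
letters of the word `W` creates the pattern `2413`. -/
def HoleAvoids2413 [Zero α] [LT α] (W : List α) : Prop :=
  ∀ w x y z, [w, x, y, z].Sublist W →
    (w = 0 → ¬ (y < z ∧ z < x)) ∧ (x = 0 → ¬ (y < w ∧ w < z)) ∧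
    (y = 0 → ¬ (w < z ∧ z < x)) ∧ (z = 0 → ¬ (y < w ∧ w < x))

theorem forall_lt_iff_lt_iff_strictMono_comp {ι κ β : Type*} [LinearOrder ι] [LinearOrder α]
    [Preorder β] {q : κ → β} {e : ι → κ} (he : Function.Surjective e) (hq : StrictMono (q ∘ e))
    (v : κ → α) : (∀ j k, v j < v k ↔ q j < q k) ↔ StrictMono (v ∘ e) := by
  refine ⟨fun h i j hij => (h _ _).2 (hq hij), fun hv => he.forall₂.2 fun i j => ?_⟩
  exact (hv.lt_iff_lt (a := i) (b := j)).trans hq.lt_iff_lt.symm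

theorem forall_not_orderIso_2413_iff [Zero α] [LinearOrder α] (u : Fin 4 → α) :
    (∀ i, u i = 0 → ¬ ∀ j k, u (i.succAbove j) < u (i.succAbove k) ↔
      (![1, 3, 0, 2] : Fin 4 → Fin 4) (i.succAbove j) < ![1, 3, 0, 2] (i.succAbove k)) ↔
    (u 0 = 0 → ¬ (u 2 < u 3 ∧ u 3 < u 1)) ∧ (u 1 = 0 → ¬ (u 2 < u 0 ∧ u 0 < u 3)) ∧
      (u 2 = 0 → ¬ (u 0 < u 3 ∧ u 3 < u 1)) ∧ (u 3 = 0 → ¬ (u 2 < u 0 ∧ u 0 < u 1)) := by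
  set p : Fin 4 → Fin 4 := ![1, 3, 0, 2]
  -- `e i` lists the positions of `p` other than `i` by increasing value.
  let e : Fin 4 → Fin 3 → Fin 3 := ![![1, 2, 0], ![1, 0, 2], ![0, 2, 1], ![2, 0, 1]]
  have he : ∀ i, Function.Surjective (e i) := by decide
  have hpe : ∀ i, StrictMono ((p ∘ i.succAbove) ∘ e i) := by decide
  have sorted (i : Fin 4) := (forall_lt_iff_lt_iff_strictMono_comp (he i) (hpe i)
    (u ∘ i.succAbove)).trans (Fin.strictMono_iff_lt_succ.trans Fin.forall_fin_two)
  refine (forall₂_congr fun i _ => not_congr (sorted i)).trans ?_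
  simp only [Fin.forall_fin_succ, IsEmpty.forall_iff, and_true]
  rfl

theorem ppAvoids_2413_iff {m : ℕ} {σ : Equiv.Perm (Fin (m + 1))} :
    PPAvoids (finSuccEquiv m ∘ σ) (![1, 3, 0, 2] : Fin 4 → Fin 4) ↔
      HoleAvoids2413 (List.ofFn σ) := by
  rw [ppAvoids_finSuccEquiv_iff (by decide)]
  constructor
  · intro h w x y z hW
    obtain ⟨g, hg, hu⟩ := (ofFn_sublist_ofFn_iff (u := ![w, x, y, z])).1 hW
    have hu : ![w, x, y, z] = σ ∘ g := funext hu
    exact (forall_not_orderIso_2413_iff ![w, x, y, z]).1 (hu ▸ h g hg)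
  · intro h g hg
    refine (forall_not_orderIso_2413_iff (σ ∘ g)).2 (h _ _ _ _ ?_)
    exact (ofFn_sublist_ofFn_iff (u := σ ∘ g)).2 ⟨g, hg, fun _ => rfl⟩

end HoleWords

section Decomposition

theorem holeAvoids2413_append_cons_iff {α : Type*} [Zero α] [LinearOrder α] {L R : List α}
    (hL : 0 ∉ L) (hR : 0 ∉ R) :
    HoleAvoids2413 (L ++ 0 :: R) ↔
      (NoStraddle R.toFinset L ∧ Avoids231 L) ∧ NoStraddle L.toFinset R ∧ Avoids312 R := by
  have sublist_iff (l₁ l₂ : List α) := append_cons_sublist_append_cons_iff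
    (l₁ := l₁) (l₂ := l₂) hL hR
  simp only [NoStraddle, Avoids231, Avoids312, List.pairwise_iff_forall_sublist,
    triplewise_iff_forall_sublist, List.mem_toFinset, ← List.singleton_sublist]
  constructor
  · intro h
    refine ⟨⟨fun {a b} hab d hd => ?_, fun a b c habc => ?_⟩, fun {a b} hab d hd => ?_,
      fun a b c habc => ?_⟩
    · exact (h a b 0 d ((sublist_iff [a, b] [d]).2 ⟨hab, hd⟩)).2.2.1 rfl
    · exact (h a b c 0 ((sublist_iff [a, b, c] []).2 ⟨habc, R.nil_sublist⟩)).2.2.2 rfl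
    · exact (h d 0 a b ((sublist_iff [d] [a, b]).2 ⟨hd, hab⟩)).2.1 rfl
    · exact (h 0 a b c ((sublist_iff [] [a, b, c]).2 ⟨L.nil_sublist, habc⟩)).1 rfl
  · rintro ⟨⟨straddle_left, avoids_left⟩, straddle_right, avoids_right⟩ w x y z hW
    refine ⟨?_, ?_, ?_, ?_⟩ <;> rintro rfl
    · exact avoids_right x y z ((sublist_iff [] [x, y, z]).1 hW).2
    · obtain ⟨hw, hyz⟩ := (sublist_iff [w] [y, z]).1 hW
      exact straddle_right hyz w hw
    · obtain ⟨hwx, hz⟩ := (sublist_iff [w, x] [z]).1 hW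
      exact straddle_left hwx z hz
    · exact avoids_left w x y ((sublist_iff [w, x, y] []).1 hW).1

theorem snk_2413_eq_splitSum (m : ℕ) :
    snk (m + 1) 1 (![1, 3, 0, 2] : Fin 4 → Fin 4) =
      splitSum (univ.erase (0 : Fin (m + 1)))
        (fun A B => #(leftWords A B) * #(rightWords A B)) := by
  classical
  simp only [snk_succ_one, ppAvoids_2413_iff]
  rw [natCard_perm_ofFn_eq_card_filter_arrangements, ← insert_erase (mem_univ (0 : Fin (m + 1))),
    card_filter_arrangements_insert (notMem_erase 0 univ), erase_insert (notMem_erase 0 univ)]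
  refine splitSum_congr fun A hA B hB => ?_
  rw [← card_product]
  congr 1
  ext ⟨L, R⟩
  simp only [mem_filter, mem_product, mem_leftWords, mem_rightWords]
  have zero_notMem {A : Finset (Fin (m + 1))} (hA : A ⊆ univ.erase 0) {L : List (Fin (m + 1))}
      (hL : L ∈ arrangements A) : 0 ∉ L := fun h =>
    notMem_erase (0 : Fin (m + 1)) univ (hA (((mem_arrangements.1 hL).2 0).1 h))
  refine Iff.trans (and_congr_right fun ⟨hL, hR⟩ => ?_) (and_and_and_comm)
  rw [holeAvoids2413_append_cons_iff (zero_notMem hA hL) (zero_notMem hB hR),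
    toFinset_of_mem_arrangements hL, toFinset_of_mem_arrangements hR]

end Decomposition

/-- `s_n^1(2413) = 2·Catalan(n) - 2^(n-1)` for `n ≥ 1`. -/
theorem count_2413_one_hole (n : ℕ) (hn : 1 ≤ n) :
    snk n 1 (![1, 3, 0, 2] : Fin 4 → Fin 4) = 2 * catalan n - 2 ^ (n - 1) := by
  obtain ⟨m, rfl⟩ := Nat.exists_eq_add_of_le' hn
  have count := splitSum_card_leftWords_mul_card_rightWords (univ.erase (0 : Fin (m + 1)))
  rw [card_erase_of_mem (mem_univ 0), card_univ, Fintype.card_fin, Nat.add_sub_cancel] at count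
  rw [snk_2413_eq_splitSum, ← count, Nat.add_sub_cancel, Nat.add_sub_cancel]
end
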